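/- arXiv:2503.18412 — 2 statements merged into one kernel-verified Lean document; each statement's English description precedes it below -/
import Mathlib

section
/- There exists a (necessarily unique) subset S_aff of the affine Weyl group W_aff such that (W_aff, S_aff) is a Coxeter system whose length function is the restriction to W_aff of the function ℓ defined by ℓ(w t_λ) = Σ_{α ∈ 𝔯₊, w(α) ∈ 𝔯₊} |⟨λ,α⟩| + Σ_{α ∈ 𝔯₊, w(α) ∈ −𝔯₊} |1 − ⟨λ,α⟩| for w ∈ W_f and λ in the coroot lattice. -/
open scoped Classical TensorProduct

noncomputable section

namespace SemiInf

/-- The data of a root datum together with its (finite) Weyl group: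
finite-rank free `ℤ`-modules `X` and `Y` with a pairing, a finite group `W`
acting on both, a finite set of roots with a subset of positive roots, and a
coroot map. The axioms are collected in `Ctx.IsRootDatum`. -/
structure Ctx where
  X : Type
  Y : Type
  [addX : AddCommGroup X]
  [addY : AddCommGroup Y]
  W : Type
  [grpW : Group W]
  [finW : Fintype W]
  [actX : DistribMulAction W X]
  [actY : DistribMulAction W Y]
  pair : Y →+ X →+ ℤ
  roots : Finset X
  pos : Finset X
  coroot : X → Y

attribute [instance] Ctx.addX Ctx.addY Ctx.grpW Ctx.finW Ctx.actX Ctx.actY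

namespace Ctx

variable (C : Ctx)

/-- The axioms of a root datum (free finite-rank lattices, perfect pairing,
finite reduced crystallographic root system with a system of positive roots),
with `W` its Weyl group acting faithfully on `X` and `Y`. -/
structure IsRootDatum : Prop where
  free_X : Module.Free ℤ C.X
  finite_X : Module.Finite ℤ C.X
  free_Y : Module.Free ℤ C.Y
  finite_Y : Module.Finite ℤ C.Y
  perfect_left : Function.Bijective fun y : C.Y => C.pair y
  perfect_right : Function.Bijective fun x : C.X => C.pair.flip x
  pos_subset : C.pos ⊆ C.roots
  root_decomp : ∀ α ∈ C.roots, α ∈ C.pos ∨ -α ∈ C.pos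
  pos_neg_disjoint : ∀ α ∈ C.pos, -α ∉ C.pos
  zero_not_root : (0 : C.X) ∉ C.roots
  reduced : ∀ α ∈ C.roots, ∀ n : ℤ, n • α ∈ C.roots → n = 1 ∨ n = -1
  coroot_self : ∀ α ∈ C.roots, C.pair (C.coroot α) α = 2
  isReflection : ∀ α ∈ C.roots, ∃ s : C.W,
    (∀ x : C.X, s • x = x - C.pair (C.coroot α) x • α) ∧
    (∀ y : C.Y, s • y = y - C.pair y α • C.coroot α)
  weyl_gen : ∀ w : C.W, w ∈ Subgroup.closure {s : C.W | ∃ α ∈ C.roots,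
    (∀ x : C.X, s • x = x - C.pair (C.coroot α) x • α) ∧
    (∀ y : C.Y, s • y = y - C.pair y α • C.coroot α)}
  faithful_X : ∀ w : C.W, (∀ x : C.X, w • x = x) → w = 1
  faithful_Y : ∀ w : C.W, (∀ y : C.Y, w • y = y) → w = 1
  pair_inv : ∀ (w : C.W) (y : C.Y) (x : C.X), C.pair (w • y) (w • x) = C.pair y x
  roots_stable : ∀ (w : C.W), ∀ α ∈ C.roots, w • α ∈ C.roots
  smul_coroot : ∀ (w : C.W), ∀ α ∈ C.roots, w • C.coroot α = C.coroot (w • α)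
  exists_regular_X : ∃ ξ : C.X, ∀ α ∈ C.pos, 0 < C.pair (C.coroot α) ξ
  exists_regular_Y : ∃ η : C.Y, ∀ α ∈ C.pos, 0 < C.pair η α

/-- The length function of the finite Weyl group:
`ℓ(w) = #{α ∈ 𝔯₊ : w(α) ∈ −𝔯₊}`. -/
def lenW (w : C.W) : ℕ := (C.pos.filter fun α => -(w • α) ∈ C.pos).card

/-- `w` is the longest element of the finite Weyl group iff it maps every
positive root to a negative root. -/
def IsLongest (w : C.W) : Prop := ∀ α ∈ C.pos, -(w • α) ∈ C.pos

/-- The set `Y₊` of dominant cocharacters. -/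
def Ypos : Set C.Y := {l | ∀ α ∈ C.pos, 0 ≤ C.pair l α}

/-- The set `Y₊₊` of strictly dominant cocharacters. -/
def Yppos : Set C.Y := {l | ∀ α ∈ C.pos, 0 < C.pair l α}

/-- The action of `W` on `Multiplicative Y`, as a homomorphism to `MulAut`. -/
def φext : C.W →* MulAut (Multiplicative C.Y) where
  toFun w :=
    { toFun := fun y => Multiplicative.ofAdd (w • Multiplicative.toAdd y)
      invFun := fun y => Multiplicative.ofAdd (w⁻¹ • Multiplicative.toAdd y)
      left_inv := fun y => by simp
      right_inv := fun y => by simp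
      map_mul' := fun a b => by simp [smul_add] }
  map_one' := by
    apply MulEquiv.ext
    intro y
    simp
  map_mul' w₁ w₂ := by
    apply MulEquiv.ext
    intro y
    simp [mul_smul]

/-- The extended affine Weyl group `W_ext = W_f ⋉ Y`. -/
abbrev Wext : Type := Multiplicative C.Y ⋊[C.φext] C.W

/-- The translation element `t_λ ∈ W_ext` associated with `λ ∈ Y`. -/
def t (l : C.Y) : C.Wext := SemidirectProduct.inl (Multiplicative.ofAdd l)

/-- The canonical embedding of the finite Weyl group in `W_ext`. -/
def σ (w : C.W) : C.Wext := SemidirectProduct.inr w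

/-- The length function on `W_ext`, defined by
`ℓ(w t_λ) = Σ_{α ∈ 𝔯₊, w(α) ∈ 𝔯₊} |⟨λ,α⟩| + Σ_{α ∈ 𝔯₊, w(α) ∈ −𝔯₊} |1 − ⟨λ,α⟩|`
(an element `g` of the semidirect product equals `w t_λ` for `w = g.right`
and `λ = w⁻¹ • g.left`). -/
def len (g : C.Wext) : ℕ :=
  ∑ α ∈ C.pos,
    if g.right • α ∈ C.pos
      then (C.pair (g.right⁻¹ • Multiplicative.toAdd g.left) α).natAbs
      else ((1 : ℤ) - C.pair (g.right⁻¹ • Multiplicative.toAdd g.left) α).natAbs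

/-- The coroot lattice `ℤ𝔯∨ ⊆ Y`. -/
def corootLattice : AddSubgroup C.Y := AddSubgroup.closure (C.coroot '' ↑C.roots)

/-- The affine Weyl group `W_aff = W_f ⋉ ℤ𝔯∨`, as a subgroup of `W_ext`. -/
def Waff : Subgroup C.Wext :=
  Subgroup.closure ((fun l => C.t l) '' ↑C.corootLattice ∪ Set.range C.σ)

/-- The set of elements of length `1` of `W_aff` (the simple affine
reflections). -/
def Saff : Set C.Wext := {g | g ∈ C.Waff ∧ C.len g = 1}

/-- The set `Ω` of elements of length `0` of `W_ext`. -/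
def OmegaSet : Set C.Wext := {g | C.len g = 0}

/-- The Bruhat order on `W_aff`: `u ≤ v` iff some reduced expression of `v`
(as a word in `S_aff`) admits a subword which is an expression of `u`. -/
def bruhatAff (u v : C.Wext) : Prop :=
  ∃ l : List C.Wext, (∀ s ∈ l, s ∈ C.Saff) ∧ l.prod = v ∧ l.length = C.len v ∧
    ∃ l' : List C.Wext, l'.Sublist l ∧ l'.prod = u

/-- The Bruhat order on `W_ext`, extending the Bruhat order of `W_aff` by
`ω u ≤ ω' v` iff `ω = ω'` and `u ≤ v`, for `ω, ω' ∈ Ω` and `u, v ∈ W_aff`. -/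
def bruhat (x y : C.Wext) : Prop :=
  ∃ ω u v : C.Wext, ω ∈ C.OmegaSet ∧ u ∈ C.Waff ∧ v ∈ C.Waff ∧
    x = ω * u ∧ y = ω * v ∧ C.bruhatAff u v

/-- The set `W_ext⁺` of `w ∈ W_ext` such that `ℓ(t_μ w) = ℓ(t_μ) + ℓ(w)` for
every dominant `μ`. -/
def WextPlus : Set C.Wext :=
  {w | ∀ μ ∈ C.Ypos, C.len (C.t μ * w) = C.len (C.t μ) + C.len w}

/-- The semiinfinite order on `W_ext`. -/
def siLE (w y : C.Wext) : Prop :=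
  ∃ μ : C.Y, C.t μ * w ∈ C.WextPlus ∧ C.t μ * y ∈ C.WextPlus ∧
    C.bruhat (C.t μ * w) (C.t μ * y)

/-- The rational vector space `ℚ ⊗ Y`. -/
abbrev QY : Type := ℚ ⊗[ℤ] C.Y

/-- The canonical map `Y → ℚ ⊗ Y`. -/
def ι : C.Y →ₗ[ℤ] C.QY := TensorProduct.mk ℤ ℚ C.Y 1

/-- The finite set of positive coroots. -/
def posCoroots : Finset C.Y := C.pos.image C.coroot

/-- Half the sum of the positive coroots, as an element of `ℚ ⊗ Y`. -/
def rhoCheck : C.QY := (2⁻¹ : ℚ) ⊗ₜ[ℤ] (∑ β ∈ C.posCoroots, β)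

/-- The set of Kostant partitions of `v ∈ ℚ ⊗ Y`: functions
`φ : 𝔯∨₊ → ℤ≥0` with `Σ_α φ(α)·α = v`. -/
def KostantSet (v : C.QY) : Set (↥C.posCoroots → ℕ) :=
  {φ | ∑ β : ↥C.posCoroots, (φ β) • C.ι (β : C.Y) = v}

/-- Kostant's partition function. -/
def KostantP (v : C.QY) : ℕ := (C.KostantSet v).ncard

/-- The action of `w ∈ W` on `ℚ ⊗ Y`. -/
def actQ (w : C.W) : C.QY →ₗ[ℤ] C.QY :=
  LinearMap.lTensor ℚ ((DistribMulAction.toAddMonoidHom C.Y w).toIntLinearMap)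

/-- The simple roots: positive roots which are not sums of two positive
roots. -/
def simpleRoots : Finset C.X :=
  C.pos.filter fun α => ¬ ∃ β ∈ C.pos, ∃ γ ∈ C.pos, α = β + γ

end Ctx

end SemiInf

/-- Abstract exchange data: a group acting on a set of "roots" with simple reflections. -/
structure ExchData (G B Φ : Type) [Group G] where
  s : B → G
  a : B → Φ
  act : G → Φ → Φ
  Pos : Set Φ
  len : G → ℕ
  act_one : ∀ x, act 1 x = x
  act_mul : ∀ g k x, act (g * k) x = act g (act k x)
  s_sq : ∀ i, s i * s i = 1
  a_pos : ∀ i, a i ∈ Pos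
  s_pos : ∀ i, ∀ b ∈ Pos, b ≠ a i → act (s i) b ∈ Pos
  conj : ∀ g i j, act g (a i) = a j → g * s i = s j * g
  len_one : len 1 = 0
  len_up : ∀ g i, act g (a i) ∈ Pos → len (g * s i) = len g + 1
  len_dn : ∀ g i, act g (a i) ∉ Pos → len g = len (g * s i) + 1
  gen : Subgroup.closure (Set.range s) = ⊤
  inj : Function.Injective s

namespace ExchData

variable {G B Φ : Type} [Group G] (E : ExchData G B Φ)

/-- Product of a word in `G`. -/
def pr (ω : List B) : G := (ω.map E.s).prod

theorem pr_nil : E.pr [] = 1 := by simp [pr]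
theorem pr_cons (i : B) (ω : List B) : E.pr (i :: ω) = E.s i * E.pr ω := by simp [pr]
theorem pr_append (u v : List B) : E.pr (u ++ v) = E.pr u * E.pr v := by simp [pr]
theorem pr_concat (u : List B) (i : B) : E.pr (u ++ [i]) = E.pr u * E.s i := by simp [pr]

theorem s_inv (i : B) : (E.s i)⁻¹ = E.s i := by
  rw [inv_eq_iff_mul_eq_one]; exact E.s_sq i

theorem mul_s_s (g : G) (i : B) : g * E.s i * E.s i = g := by
  rw [mul_assoc, E.s_sq, mul_one]

theorem exchange (t : B) (A : List B) (h : E.act (E.pr A) (E.a t) ∉ E.Pos) :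
    ∃ A1 r A2, A = A1 ++ r :: A2 ∧ E.pr A * E.s t = E.pr (A1 ++ A2) := by
  induction A with
  | nil => rw [pr_nil, E.act_one] at h; exact absurd (E.a_pos t) h
  | cons r A ih =>
    by_cases hA : E.act (E.pr A) (E.a t) ∈ E.Pos
    · refine ⟨[], r, A, rfl, ?_⟩
      rw [pr_cons, E.act_mul] at h
      have hb : E.act (E.pr A) (E.a t) = E.a r := by
        by_contra hne
        exact h (E.s_pos r _ hA hne)
      have := E.conj _ _ _ hb
      rw [pr_cons, mul_assoc, this, ← mul_assoc, E.s_sq, one_mul]; rfl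
    · obtain ⟨A1, q, A2, rfl, h2⟩ := ih hA
      refine ⟨r :: A1, q, A2, rfl, ?_⟩
      rw [pr_cons, mul_assoc, h2, List.cons_append, pr_cons]

theorem len_mul_le (g : G) (i : B) : E.len (g * E.s i) ≤ E.len g + 1 := by
  by_cases h : E.act g (E.a i) ∈ E.Pos
  · exact (E.len_up g i h).le
  · have := E.len_dn g i h; omega

theorem len_mul_pr_le (g : G) (ω : List B) : E.len (g * E.pr ω) ≤ E.len g + ω.length := by
  induction ω generalizing g with
  | nil => simp [pr_nil]
  | cons i ω ih =>
    rw [pr_cons, ← mul_assoc]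
    have := ih (g * E.s i)
    have := E.len_mul_le g i
    simp only [List.length_cons]; omega

theorem len_pr_le (ω : List B) : E.len (E.pr ω) ≤ ω.length := by
  have := E.len_mul_pr_le 1 ω
  rwa [one_mul, E.len_one, zero_add] at this

theorem exists_red_mul (g : G) (i : B) (h : ∃ ω, E.pr ω = g ∧ ω.length = E.len g) :
    ∃ ω, E.pr ω = g * E.s i ∧ ω.length = E.len (g * E.s i) := by
  obtain ⟨ω, rfl, hl⟩ := h
  by_cases h : E.act (E.pr ω) (E.a i) ∈ E.Pos
  · refine ⟨ω ++ [i], E.pr_concat _ _, ?_⟩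
    rw [E.len_up _ _ h, ← hl]; simp
  · obtain ⟨A1, r, A2, rfl, h2⟩ := E.exchange i ω h
    refine ⟨A1 ++ A2, h2.symm, ?_⟩
    have := E.len_dn _ _ h
    simp only [List.length_append, List.length_cons] at *
    omega

theorem exists_red (g : G) : ∃ ω, E.pr ω = g ∧ ω.length = E.len g := by
  have hg : g ∈ Subgroup.closure (Set.range E.s) := by rw [E.gen]; trivial
  induction hg using Subgroup.closure_induction_right with
  | one => exact ⟨[], E.pr_nil, by rw [E.len_one]; rfl⟩
  | mul_right x hx y hy ih =>
    obtain ⟨i, rfl⟩ := hy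
    exact E.exists_red_mul x i ih
  | mul_inv_cancel x hx y hy ih =>
    obtain ⟨i, rfl⟩ := hy
    rw [E.s_inv]
    exact E.exists_red_mul x i ih

/-- A word is reduced. -/
def Red (ω : List B) : Prop := E.len (E.pr ω) = ω.length

theorem Red.rightPart {u v : List B} (h : E.Red (u ++ v)) : E.Red v := by
  unfold Red at *
  obtain ⟨ω, h1, h2⟩ := E.exists_red (E.pr v)
  have h3 := E.len_pr_le (u ++ ω)
  rw [pr_append, h1, ← pr_append] at h3
  have := E.len_pr_le v
  simp only [List.length_append] at *
  omega

theorem Red.leftPart {u v : List B} (h : E.Red (u ++ v)) : E.Red u := by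
  unfold Red at *
  have h3 := E.len_mul_pr_le (E.pr u) v
  rw [← pr_append] at h3
  have := E.len_pr_le u
  simp only [List.length_append] at *
  omega

/-- The Coxeter matrix. -/
def mat : CoxeterMatrix B where
  M := Matrix.of fun i j => orderOf (E.s i * E.s j)
  isSymm := by
    ext i j
    simp only [Matrix.transpose_apply, Matrix.of_apply]
    rw [← orderOf_inv, mul_inv_rev, E.s_inv, E.s_inv]
  diagonal i := by simp [E.s_sq]
  off_diagonal i j hij := by
    simp only [Matrix.of_apply, ne_eq, orderOf_eq_one_iff]
    intro h
    apply hij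
    apply E.inj
    rw [← E.s_inv j]
    exact eq_inv_of_mul_eq_one_left h

theorem mat_apply (i j : B) : E.mat i j = orderOf (E.s i * E.s j) := rfl

/-- The abstract Coxeter system. -/
abbrev cs0 : CoxeterSystem E.mat E.mat.Group := E.mat.toCoxeterSystem

theorem liftable : E.mat.IsLiftable E.s := fun i j => by
  rw [mat_apply]; exact pow_orderOf_eq_one _

/-- Map from the abstract Coxeter group. -/
def f : E.mat.Group →* G := E.cs0.lift ⟨E.s, E.liftable⟩

theorem f_simple (i : B) : E.f (E.cs0.simple i) = E.s i :=
  E.cs0.lift_apply_simple E.liftable i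

/-- Word product in the abstract group. -/
abbrev mu (ω : List B) : E.mat.Group := E.cs0.wordProd ω

theorem f_mu (ω : List B) : E.f (E.mu ω) = E.pr ω := by
  induction ω with
  | nil => simp [mu, pr_nil]
  | cons i ω ih =>
    rw [mu, CoxeterSystem.wordProd_cons, map_mul, f_simple, pr_cons]
    rw [mu] at ih; rw [ih]

open CoxeterSystem in
theorem alt_split (i j : B) (k d : ℕ) :
    ∃ L, alternatingWord i j (k + d) = L ++ alternatingWord i j k := by
  induction d with
  | zero => exact ⟨[], rfl⟩
  | succ d ih =>
    obtain ⟨L, hL⟩ := ih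
    rw [← add_assoc, alternatingWord_succ', hL]
    exact ⟨_ :: L, rfl⟩

open CoxeterSystem in
theorem pow_of_alt (i j : B) (N : ℕ)
    (h : E.pr (alternatingWord i j N) = E.pr (alternatingWord j i N)) :
    (E.s i * E.s j) ^ N = 1 := by
  have hinv : E.s j * E.s i = (E.s i * E.s j)⁻¹ := by rw [mul_inv_rev, E.s_inv, E.s_inv]
  rw [← f_mu, ← f_mu, mu, mu, prod_alternatingWord_eq_mul_pow, prod_alternatingWord_eq_mul_pow] at h
  simp only [map_mul, map_pow, f_simple, apply_ite E.f, map_one] at h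
  rcases Nat.even_or_odd' N with ⟨k, rfl | rfl⟩
  · have : 2 * k / 2 = k := by omega
    simp only [this, even_two_mul, if_true, one_mul] at h
    rw [hinv, inv_pow, eq_inv_iff_mul_eq_one, ← pow_add] at h
    rw [two_mul]; exact h
  · have : (2 * k + 1) / 2 = k := by omega
    have h2 : ¬ Even (2 * k + 1) := by simp
    simp only [this, h2, if_false] at h
    rw [hinv, inv_pow, eq_mul_inv_iff_mul_eq] at h
    have h3 : E.s i * (E.s j * (E.s i * E.s j) ^ k * (E.s i * E.s j) ^ k) = 1 := by
      rw [h, E.s_sq]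
    rw [← h3]
    rw [show 2 * k + 1 = 1 + k + k by omega, pow_add, pow_add, pow_one]
    simp only [mul_assoc]

open CoxeterSystem in
theorem dihedral (i j : B) (N : ℕ) (hN : 1 ≤ N)
    (h : E.pr (alternatingWord i j N) = E.pr (alternatingWord j i N))
    (hr : E.Red (alternatingWord i j N)) :
    E.mu (alternatingWord i j N) = E.mu (alternatingWord j i N) := by
  have hd := orderOf_dvd_of_pow_eq_one (E.pow_of_alt i j N h)
  rw [← mat_apply] at hd
  have hm1 : 1 ≤ E.mat i j := Nat.pos_of_dvd_of_pos hd hN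
  have hmN : E.mat i j ≤ N := Nat.le_of_dvd hN hd
  rcases hmN.eq_or_lt with he | hlt
  · have := E.cs0.prod_alternatingWord_eq_prod_alternatingWord_sub i j N (by omega)
    rw [mu, this, show E.mat i j * 2 - N = N by omega]
  · exfalso
    obtain ⟨L, hL⟩ := alt_split i j (E.mat i j + 1) (N - (E.mat i j + 1))
    rw [show E.mat i j + 1 + (N - (E.mat i j + 1)) = N by omega] at hL
    rw [hL] at hr
    have hr' := Red.rightPart E hr
    have h1 := E.cs0.prod_alternatingWord_eq_prod_alternatingWord_sub i j (E.mat i j + 1) (by omega)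
    have h2 := congrArg E.f h1
    rw [f_mu, f_mu] at h2
    unfold Red at hr'
    rw [h2] at hr'
    have := E.len_pr_le (alternatingWord j i (E.mat i j * 2 - (E.mat i j + 1)))
    rw [length_alternatingWord] at *
    omega

/-- Matsumoto property in length `n`. -/
def Mats (n : ℕ) : Prop := ∀ A A' : List B, A.length = n → A'.length = n → E.Red A →
  E.pr A = E.pr A' → E.mu A = E.mu A'

theorem mats_head {n : ℕ} (hP : E.Mats n) (r : B) (A A' : List B)
    (hA : A.length = n) (hA' : A'.length = n) (hr : E.Red (r :: A))
    (h : E.pr (r :: A) = E.pr (r :: A')) : E.mu (r :: A) = E.mu (r :: A') := by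
  rw [mu, mu, CoxeterSystem.wordProd_cons, CoxeterSystem.wordProd_cons]
  congr 1
  apply hP A A' hA hA' (Red.rightPart E (u := [r]) hr)
  rw [pr_cons, pr_cons] at h
  exact mul_left_cancel h

theorem mats_last {n : ℕ} (hP : E.Mats n) (r : B) (A A' : List B)
    (hA : A.length = n) (hA' : A'.length = n) (hr : E.Red (A ++ [r]))
    (h : E.pr (A ++ [r]) = E.pr (A' ++ [r])) : E.mu (A ++ [r]) = E.mu (A' ++ [r]) := by
  rw [mu, mu, CoxeterSystem.wordProd_append, CoxeterSystem.wordProd_append]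
  congr 1
  apply hP A A' hA hA' (Red.leftPart E hr)
  rw [pr_concat, pr_concat] at h
  exact mul_right_cancel h

theorem mats_step {n : ℕ} (hP : E.Mats n) (x t : B) (A v : List B)
    (hA : A.length = n) (hv : v.length = n) (hr : E.Red (x :: A))
    (h : E.pr (x :: A) = E.pr (v ++ [t])) (hne : E.mu (x :: A) ≠ E.mu (v ++ [t])) :
    E.pr (A ++ [t]) = E.pr (x :: A) ∧ E.mu (A ++ [t]) = E.mu (v ++ [t]) := by
  have hst : E.pr (x :: A) * E.s t = E.pr v := by rw [h, pr_concat, mul_s_s]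
  have hneg : E.act (E.pr (x :: A)) (E.a t) ∉ E.Pos := by
    intro hp
    have h1 := E.len_up _ _ hp
    rw [hst] at h1
    have h2 := E.len_pr_le v
    unfold Red at hr
    rw [hr] at h1
    simp only [List.length_cons] at h1
    omega
  obtain ⟨A1, r, A2, hsplit, h2⟩ := E.exchange t _ hneg
  have hD : E.pr (A1 ++ A2 ++ [t]) = E.pr (x :: A) := by
    rw [pr_concat, ← h2, mul_s_s]
  have hlen : (A1 ++ A2).length = n := by
    have := congrArg List.length hsplit
    simp only [List.length_cons, List.length_append] at *
    omega
  have hrv : E.Red (v ++ [t]) := by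
    unfold Red at *
    rw [← h, hr]; simp [hA, hv]
  have hmu : E.mu (A1 ++ A2 ++ [t]) = E.mu (v ++ [t]) :=
    (E.mats_last hP t v (A1 ++ A2) hv hlen hrv (by rw [hD, h])).symm
  cases A1 with
  | nil =>
    simp only [List.nil_append, List.cons.injEq] at hsplit
    obtain ⟨rfl, rfl⟩ := hsplit
    exact ⟨hD, hmu⟩
  | cons y A1 =>
    exfalso
    simp only [List.cons_append, List.cons.injEq] at hsplit
    obtain ⟨rfl, hA'⟩ := hsplit
    apply hne
    rw [← hmu]
    simp only [List.cons_append]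
    refine E.mats_head hP x _ _ hA ?_ hr hD.symm
    simp only [List.length_cons, List.length_append, List.length_nil] at *
    omega

open CoxeterSystem in
theorem mats_iter {n : ℕ} (hP : E.Mats n) (j : ℕ) : ∀ (k : ℕ) (s t : B) (L v : List B),
    1 ≤ k → k + j = n + 1 → L.length = j → v.length = n → E.Red (L ++ alternatingWord t s k) →
    E.pr (L ++ alternatingWord t s k) = E.pr (v ++ [t]) →
    E.mu (L ++ alternatingWord t s k) = E.mu (v ++ [t]) := by
  induction j with
  | zero =>
    intro k s t L v hk hkn hL hv hr h
    obtain rfl := List.length_eq_zero_iff.1 hL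
    obtain rfl : k = n + 1 := by omega
    rw [List.nil_append] at *
    by_contra hne
    have hr0 := hr
    have h0 := h
    rw [alternatingWord_succ'] at hr h hne
    obtain ⟨h1, h2⟩ := E.mats_step hP _ _ _ _ (by simp) hv hr h hne
    apply hne
    rw [← h2]
    rw [← alternatingWord_succ'] at h1 ⊢
    have h3 : alternatingWord t s n ++ [t] = alternatingWord s t (n + 1) := by
      rw [alternatingWord_succ, List.concat_eq_append]
    rw [h3] at h1 ⊢
    exact E.dihedral _ _ _ (by omega) h1.symm hr0
  | succ j ih =>
    intro k s t L v hk hkn hL hv hr h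
    by_contra hne
    obtain ⟨x, L, rfl⟩ : ∃ x L', L = x :: L' := by
      cases L with
      | nil => simp at hL
      | cons x L => exact ⟨x, L, rfl⟩
    simp only [List.length_cons] at hL
    rw [List.cons_append] at hr h hne
    obtain ⟨h1, h2⟩ := E.mats_step hP _ _ _ _ (by simp; omega) hv hr h hne
    have h3 : alternatingWord t s k ++ [t] = alternatingWord s t (k + 1) := by
      rw [alternatingWord_succ, List.concat_eq_append]
    rw [List.append_assoc, h3] at h1 h2
    obtain ⟨k, rfl⟩ : ∃ k', k = k' + 1 := ⟨k - 1, by omega⟩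
    have h4 : x :: (L ++ alternatingWord t s (k + 1)) =
        (x :: (L ++ alternatingWord s t k)) ++ [s] := by
      rw [alternatingWord_succ, List.concat_eq_append]; simp
    have hr2 : E.Red (L ++ alternatingWord s t (k + 1 + 1)) := by
      unfold Red at *
      rw [h1, hr]; simp; omega
    have := ih (k + 1 + 1) t s L (x :: (L ++ alternatingWord s t k)) (by omega) (by omega)
      (by omega) (by simp; omega) hr2 (by rw [← h4]; exact h1)
    apply hne
    rw [← h2, this, h4]

theorem mats (n : ℕ) : E.Mats n := by
  induction n with
  | zero =>
    intro A A' hA hA' _ _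
    rw [List.length_eq_zero_iff.1 hA, List.length_eq_zero_iff.1 hA']
  | succ n ih =>
    intro A A' hA hA' hr h
    obtain ⟨u, s, rfl⟩ : ∃ u s, A = u ++ [s] := by
      rcases List.eq_nil_or_concat A with rfl | ⟨u, s, h⟩
      · simp at hA
      · exact ⟨u, s, by simpa using h⟩
    obtain ⟨v, t, rfl⟩ : ∃ u s, A' = u ++ [s] := by
      rcases List.eq_nil_or_concat A' with rfl | ⟨u, s, h⟩
      · simp at hA'
      · exact ⟨u, s, by simpa using h⟩
    exact E.mats_iter ih n 1 s t u v le_rfl (by omega) (by simpa using hA) (by simpa using hA') hr h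

theorem exists_red_mu (ω : List B) : ∃ ω', E.Red ω' ∧ E.mu ω' = E.mu ω := by
  induction ω using List.reverseRecOn with
  | nil => exact ⟨[], by simp [Red, pr_nil, E.len_one], rfl⟩
  | append_singleton ω i ih =>
    obtain ⟨A, hA, hmu⟩ := ih
    have key : E.mu (ω ++ [i]) = E.mu A * E.cs0.simple i := by
      rw [mu, CoxeterSystem.wordProd_append, CoxeterSystem.wordProd_singleton]
      congr 1; exact hmu.symm
    by_cases h : E.act (E.pr A) (E.a i) ∈ E.Pos
    · refine ⟨A ++ [i], ?_, ?_⟩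
      · have := E.len_up _ _ h
        unfold Red at *
        rw [pr_concat, this, hA]; simp
      · rw [key, mu, CoxeterSystem.wordProd_append, CoxeterSystem.wordProd_singleton]
    · obtain ⟨D, h1, h2⟩ := E.exists_red (E.pr A * E.s i)
      have h3 := E.len_dn _ _ h
      have h4 : E.pr (D ++ [i]) = E.pr A := by rw [pr_concat, h1, mul_s_s]
      refine ⟨D, by unfold Red; rw [h1, h2], ?_⟩
      have h5 := E.mats A.length A (D ++ [i]) rfl (by unfold Red at hA; simp; omega) hA h4.symm
      rw [key, h5, mu, mu, CoxeterSystem.wordProd_append, CoxeterSystem.wordProd_singleton,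
        CoxeterSystem.simple_mul_simple_cancel_right]

theorem f_bij : Function.Bijective E.f := by
  constructor
  · rw [injective_iff_map_eq_one]
    intro x hx
    obtain ⟨ω, rfl⟩ := E.cs0.wordProd_surjective x
    obtain ⟨ω', hr, hmu⟩ := E.exists_red_mu ω
    change E.f (E.mu ω) = 1 at hx
    change E.mu ω = 1
    rw [← hmu, f_mu] at hx
    unfold Red at hr
    rw [hx, E.len_one] at hr
    rw [← hmu, List.length_eq_zero_iff.1 hr.symm]
    simp [mu]
  · intro g
    obtain ⟨ω, h, _⟩ := E.exists_red g
    exact ⟨E.mu ω, by rw [f_mu, h]⟩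

/-- The resulting Coxeter system. -/
def cs : CoxeterSystem E.mat G := E.cs0.map (MulEquiv.ofBijective E.f E.f_bij)

theorem cs_simple (i : B) : E.cs.simple i = E.s i := by
  rw [cs, CoxeterSystem.map_simple]
  exact E.f_simple i

theorem cs_wordProd (ω : List B) : E.cs.wordProd ω = E.pr ω := by
  have : E.cs.simple = E.s := funext E.cs_simple
  rw [CoxeterSystem.wordProd, this, pr]

theorem cs_length (g : G) : E.cs.length g = E.len g := by
  apply le_antisymm
  · obtain ⟨ω, h, h2⟩ := E.exists_red g
    rw [← h2, ← h, ← cs_wordProd]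
    exact E.cs.length_wordProd_le ω
  · obtain ⟨ω, h, h2⟩ := E.cs.exists_isReduced g
    rw [h2, h, cs_wordProd]
    exact E.len_pr_le ω

end ExchData
namespace SemiInf
namespace Ctx

section Finite

variable {C : Ctx} (h : C.IsRootDatum)

theorem wsmul_zsmul (w : C.W) (n : ℤ) (x : C.X) : w • (n • x) = n • (w • x) :=
  map_zsmul (DistribSMul.toAddMonoidHom C.X w) n x

/-- Weyl group reflection. -/
def wr (C : Ctx) (α : C.X) : C.W :=
  if hs : ∃ s : C.W, (∀ x : C.X, s • x = x - C.pair (C.coroot α) x • α) ∧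
    (∀ y : C.Y, s • y = y - C.pair y α • C.coroot α) then hs.choose else 1

include h

theorem wr_X {α : C.X} (hα : α ∈ C.roots) (x : C.X) :
    C.wr α • x = x - C.pair (C.coroot α) x • α := by
  have hs := h.isReflection α hα
  rw [wr, dif_pos hs]
  exact hs.choose_spec.1 x

theorem X_ext {x : C.X} (hx : ∀ y, C.pair y x = 0) : x = 0 := by
  apply h.perfect_right.1
  ext y
  simpa using hx y

theorem Y_ext {y : C.Y} (hy : ∀ x, C.pair y x = 0) : y = 0 := by
  apply h.perfect_left.1
  ext x
  simpa using hy x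

theorem neg_root {α : C.X} (hα : α ∈ C.roots) : -α ∈ C.roots := by
  have := h.roots_stable (C.wr α) α hα
  rw [wr_X h hα, h.coroot_self α hα] at this
  convert this using 1
  rw [two_smul]; abel

theorem pair_coroot_smul (w : C.W) {α : C.X} (hα : α ∈ C.roots) (x : C.X) :
    C.pair (C.coroot (w • α)) (w • x) = C.pair (C.coroot α) x := by
  rw [← h.smul_coroot w α hα, h.pair_inv]

theorem coroot_neg {α : C.X} (hα : α ∈ C.roots) (x : C.X) :
    C.pair (C.coroot (-α)) x = - C.pair (C.coroot α) x := by
  have hw := wr_X h hα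
  have e : C.wr α • α = -α := by
    rw [hw, h.coroot_self α hα, two_smul]; abel
  have := pair_coroot_smul h (C.wr α) hα ((C.wr α)⁻¹ • x)
  rw [smul_inv_smul, e] at this
  rw [this]
  have h2 : x = C.wr α • ((C.wr α)⁻¹ • x) := by rw [smul_inv_smul]
  conv_rhs => rw [h2, hw]
  simp only [map_sub, map_zsmul, h.coroot_self α hα, smul_eq_mul]
  ring

omit h in
/-- Invariant form. -/
def Bf (C : Ctx) (x y : C.X) : ℤ := ∑ γ ∈ C.roots, C.pair (C.coroot γ) x * C.pair (C.coroot γ) y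

theorem Bf_inv (w : C.W) (x y : C.X) : C.Bf (w • x) (w • y) = C.Bf x y := by
  unfold Bf
  refine Finset.sum_nbij' (fun γ => w⁻¹ • γ) (fun γ => w • γ) ?_ ?_ ?_ ?_ ?_
  · intro γ hγ; exact h.roots_stable _ _ hγ
  · intro γ hγ; exact h.roots_stable _ _ hγ
  · intro γ hγ; simp
  · intro γ hγ; simp
  · intro γ hγ
    have h1 := pair_coroot_smul h w⁻¹ hγ (w • x)
    have h2 := pair_coroot_smul h w⁻¹ hγ (w • y)
    rw [inv_smul_smul] at h1 h2
    rw [h1, h2]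

omit h in
theorem Bf_sub_left (x x' y : C.X) : C.Bf (x - x') y = C.Bf x y - C.Bf x' y := by
  simp only [Bf, map_sub, sub_mul, Finset.sum_sub_distrib]

omit h in
theorem Bf_smul_left (n : ℤ) (x y : C.X) : C.Bf (n • x) y = n * C.Bf x y := by
  simp only [Bf, map_zsmul, smul_eq_mul, mul_assoc, Finset.mul_sum]

omit h in
theorem Bf_comm (x y : C.X) : C.Bf x y = C.Bf y x := by
  simp only [Bf, mul_comm]

theorem Bf_pos {α : C.X} (hα : α ∈ C.roots) : 0 < C.Bf α α := by
  unfold Bf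
  apply Finset.sum_pos'
  · intro γ _; exact mul_self_nonneg _
  · exact ⟨α, hα, by rw [h.coroot_self α hα]; norm_num⟩

theorem Bf_root {α : C.X} (hα : α ∈ C.roots) (x : C.X) :
    2 * C.Bf x α = C.pair (C.coroot α) x * C.Bf α α := by
  have h1 := Bf_inv h (C.wr α) x α
  have e : C.wr α • α = (-1 : ℤ) • α := by
    rw [wr_X h hα, h.coroot_self α hα, two_smul]; simp
  rw [e, Bf_comm, Bf_smul_left, wr_X h hα, Bf_comm, Bf_sub_left, Bf_smul_left] at h1
  linarith

theorem pair_symm {α β : C.X} (hα : α ∈ C.roots) (hβ : β ∈ C.roots)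
    (hp : 0 < C.pair (C.coroot α) β) : 0 < C.pair (C.coroot β) α := by
  have h1 := Bf_root h hα β
  have h2 := Bf_root h hβ α
  rw [Bf_comm] at h2
  have h3 := mul_pos hp (Bf_pos h hα)
  rw [← h1, h2] at h3
  exact (mul_pos_iff_of_pos_right (Bf_pos h hβ)).1 h3

theorem eq_of_pair_two {α β : C.X} (hα : α ∈ C.roots) (hβ : β ∈ C.roots)
    (h1 : C.pair (C.coroot α) β = 2) (h2 : C.pair (C.coroot β) α = 2) : α = β := by
  have hα2 := h.coroot_self α hα
  have hβ2 := h.coroot_self β hβ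
  set u := C.wr α * C.wr β with hu
  have hd : u • (α - β) = α - β := by
    rw [hu, mul_smul, wr_X h hβ, map_sub, h2, hβ2, sub_self, zero_smul, sub_zero,
      wr_X h hα, map_sub, h1, hα2, sub_self, zero_smul, sub_zero]
  have ha : u • α = α + (2 : ℤ) • (α - β) := by
    rw [hu, mul_smul, wr_X h hβ, h2, wr_X h hα, map_sub, map_zsmul, h1, hα2]
    simp only [smul_eq_mul]
    module
  have hk : ∀ k : ℕ, u ^ k • α = α + (2 * k : ℤ) • (α - β) := by
    intro k
    induction k with
    | zero => simp
    | succ k ih =>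
      rw [pow_succ', mul_smul, ih, smul_add, wsmul_zsmul, hd, ha]
      push_cast
      module
  have h3 := hk (orderOf u)
  rw [pow_orderOf_eq_one, one_smul] at h3
  have h4 : (2 * (orderOf u) : ℤ) • (α - β) = 0 := by
    rw [left_eq_add] at h3; exact h3
  have h5 : α - β = 0 := by
    apply X_ext h
    intro y
    have := congrArg (C.pair y) h4
    rw [map_zsmul, map_zero, smul_eq_mul] at this
    have hpos := orderOf_pos u
    rcases mul_eq_zero.1 this with h6 | h6
    · omega
    · exact h6
  exact sub_eq_zero.1 h5

theorem root_sub {α β : C.X} (hα : α ∈ C.roots) (hβ : β ∈ C.roots)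
    (hp : 0 < C.pair (C.coroot α) β) : β - α ∈ C.roots ∨ β - α = 0 := by
  have hq := pair_symm h hα hβ hp
  by_cases p1 : C.pair (C.coroot α) β = 1
  · left
    have := h.roots_stable (C.wr α) β hβ
    rwa [wr_X h hα, p1, one_smul] at this
  by_cases q1 : C.pair (C.coroot β) α = 1
  · left
    have := h.roots_stable (C.wr β) α hα
    rw [wr_X h hβ, q1, one_smul] at this
    have := neg_root h this
    rwa [neg_sub] at this
  right
  have h1 := Bf_root h hα β
  have h2 := Bf_root h hβ α
  have ha := Bf_pos h hα
  have hb := Bf_pos h hβ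
  have hle : C.Bf (α - β) (α - β) ≤ 0 := by
    have e : C.Bf (α - β) (α - β) = C.Bf α α + C.Bf β β - C.Bf α β - C.Bf β α := by
      rw [Bf_sub_left, Bf_comm α, Bf_comm β, Bf_sub_left, Bf_sub_left]; ring
    have p2 : 2 ≤ C.pair (C.coroot α) β := by omega
    have q2 : 2 ≤ C.pair (C.coroot β) α := by omega
    have := mul_le_mul_of_nonneg_right p2 ha.le
    have := mul_le_mul_of_nonneg_right q2 hb.le
    rw [e]; linarith
  have hz : ∀ γ ∈ C.roots, C.pair (C.coroot γ) (α - β) * C.pair (C.coroot γ) (α - β) = 0 := by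
    apply (Finset.sum_eq_zero_iff_of_nonneg (fun γ _ => mul_self_nonneg _)).1
    exact le_antisymm hle (Finset.sum_nonneg fun γ _ => mul_self_nonneg _)
  have z1 := mul_self_eq_zero.1 (hz α hα)
  have z2 := mul_self_eq_zero.1 (hz β hβ)
  rw [map_sub, h.coroot_self α hα] at z1
  rw [map_sub, h.coroot_self β hβ] at z2
  rw [eq_of_pair_two h hα hβ (by omega) (by omega), sub_self]

end Finite

section Affine

variable {C : Ctx} (h : C.IsRootDatum)

/-- Action of the extended affine Weyl group on affine functions. -/
def act (C : Ctx) (g : C.Wext) (v : C.X × ℤ) : C.X × ℤ :=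
  (g.right • v.1, v.2 + C.pair (Multiplicative.toAdd g.left) (g.right • v.1))

theorem act_one (v : C.X × ℤ) : C.act 1 v = v := by
  simp [act]

include h in
theorem act_mul (g k : C.Wext) (v : C.X × ℤ) : C.act (g * k) v = C.act g (C.act k v) := by
  have e : Multiplicative.toAdd (g * k).left =
      Multiplicative.toAdd g.left + g.right • Multiplicative.toAdd k.left := rfl
  have e2 : (g * k).right = g.right * k.right := rfl
  unfold act
  rw [e, e2]
  simp only [mul_smul, map_add, AddMonoidHom.add_apply, h.pair_inv]
  ext
  · rfl
  · simp only; ring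

theorem act_sub (g : C.Wext) (v v' : C.X × ℤ) : C.act g (v - v') = C.act g v - C.act g v' := by
  ext
  · simp [act, smul_sub]
  · simp [act, smul_sub]; ring

theorem act_zsmul (g : C.Wext) (n : ℤ) (v : C.X × ℤ) : C.act g (n • v) = n • C.act g v := by
  ext
  · simp [act, wsmul_zsmul]
  · simp [act, wsmul_zsmul, mul_add]

theorem act_neg (g : C.Wext) (v : C.X × ℤ) : C.act g (-v) = - C.act g v := by
  have := act_zsmul g (-1) v
  simpa using this

include h in
theorem act_faithful {g k : C.Wext} (hgk : ∀ v, C.act g v = C.act k v) : g = k := by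
  have hr : g.right = k.right := by
    have : k.right⁻¹ * g.right = 1 := by
      apply h.faithful_X
      intro x
      have := congrArg Prod.fst (hgk (x, 0))
      simp only [act] at this
      rw [mul_smul, this, inv_smul_smul]
    exact (inv_mul_eq_one.1 this).symm
  apply SemidirectProduct.ext
  · have : Multiplicative.toAdd g.left - Multiplicative.toAdd k.left = 0 := by
      apply Y_ext h
      intro x
      have := congrArg Prod.snd (hgk (g.right⁻¹ • x, 0))
      simp only [act] at this
      rw [← hr, smul_inv_smul, zero_add, zero_add] at this
      rw [map_sub, AddMonoidHom.sub_apply, this, sub_self]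
    exact Multiplicative.toAdd.injective (sub_eq_zero.1 this)
  · exact hr

/-- Affine reflection. -/
def rf (C : Ctx) (b : C.X × ℤ) : C.Wext :=
  ⟨Multiplicative.ofAdd (b.2 • C.coroot b.1), C.wr b.1⟩

include h

theorem act_rf {b : C.X × ℤ} (hb : b.1 ∈ C.roots) (v : C.X × ℤ) :
    C.act (C.rf b) v = v - C.pair (C.coroot b.1) v.1 • b := by
  ext
  · exact wr_X h hb v.1
  · simp only [act, rf, wr_X h hb, toAdd_ofAdd, map_zsmul, AddMonoidHom.coe_smul, Pi.smul_apply, map_sub,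
      h.coroot_self _ hb, smul_eq_mul, Prod.snd_sub, Prod.smul_snd]
    ring

theorem act_root (g : C.Wext) {v : C.X × ℤ} (hv : v.1 ∈ C.roots) : (C.act g v).1 ∈ C.roots :=
  h.roots_stable _ _ hv

theorem rf_conj (g : C.Wext) {b b' : C.X × ℤ} (hb : b.1 ∈ C.roots) (e : C.act g b = b') :
    g * C.rf b = C.rf b' * g := by
  subst e
  apply act_faithful h
  intro v
  rw [act_mul h, act_mul h, act_rf h hb, act_rf h (act_root h g hb), act_sub, act_zsmul]
  congr 2
  exact (pair_coroot_smul h g.right hb v.1).symm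

theorem rf_self {b : C.X × ℤ} (hb : b.1 ∈ C.roots) : C.act (C.rf b) b = -b := by
  rw [act_rf h hb, h.coroot_self _ hb, two_smul]; abel

theorem rf_sq {b : C.X × ℤ} (hb : b.1 ∈ C.roots) : C.rf b * C.rf b = 1 := by
  apply act_faithful h
  intro v
  rw [act_mul h, act_rf h hb v, act_sub, act_zsmul, rf_self h hb, act_rf h hb v, act_one]
  rw [smul_neg]; abel

theorem rf_neg {b : C.X × ℤ} (hb : b.1 ∈ C.roots) : C.rf (-b) = C.rf b := by
  apply act_faithful h
  intro v
  have hb' : (-b).1 ∈ C.roots := neg_root h hb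
  rw [act_rf h hb, act_rf h hb', Prod.fst_neg, coroot_neg h hb, neg_smul_neg]

omit h in
/-- Height of an affine function. -/
def ht (η : C.Y) (N : ℤ) (v : C.X × ℤ) : ℤ := v.2 * N + C.pair η v.1

omit h in
theorem ht_add (η : C.Y) (N : ℤ) (v w : C.X × ℤ) : ht η N (v + w) = ht η N v + ht η N w := by
  simp [ht]; ring
omit h in
theorem ht_sub (η : C.Y) (N : ℤ) (v w : C.X × ℤ) : ht η N (v - w) = ht η N v - ht η N w := by
  simp [ht]; ring
omit h in
theorem ht_neg (η : C.Y) (N : ℤ) (v : C.X × ℤ) : ht η N (-v) = - ht η N v := by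
  simp [ht]; ring
omit h in
theorem ht_zsmul (η : C.Y) (N n : ℤ) (v : C.X × ℤ) : ht η N (n • v) = n * ht η N v := by
  simp [ht]; ring

omit h in
/-- Condition on the pair `(η, N)`. -/
structure Good (C : Ctx) (η : C.Y) (N : ℤ) : Prop where
  pos : ∀ α ∈ C.pos, 0 < C.pair η α
  bd : ∀ α ∈ C.roots, |C.pair η α| < N
  Npos : 0 < N

theorem exists_good : ∃ (η : C.Y) (N : ℤ), C.Good η N := by
  obtain ⟨η, hη⟩ := h.exists_regular_Y
  refine ⟨η, 1 + ∑ α ∈ C.roots, |C.pair η α|, hη, ?_, ?_⟩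
  · intro α hα
    have := Finset.single_le_sum (f := fun α => |C.pair η α|) (fun i _ => abs_nonneg _) hα
    omega
  · have := Finset.sum_nonneg (s := C.roots) (f := fun α => |C.pair η α|) (fun i _ => abs_nonneg _)
    omega

variable {η : C.Y} {N : ℤ} (hg : C.Good η N)
include hg

theorem ht_pos_iff {v : C.X × ℤ} (hv : v.1 ∈ C.roots) :
    0 < ht η N v ↔ 0 < v.2 ∨ (v.2 = 0 ∧ v.1 ∈ C.pos) := by
  have hb := abs_lt.1 (hg.bd _ hv)
  have hN := hg.Npos
  unfold ht
  rcases lt_trichotomy v.2 0 with h1 | h1 | h1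
  · have : v.2 * N ≤ (-1) * N := mul_le_mul_of_nonneg_right (by omega) hN.le
    constructor
    · intro; linarith
    · rintro (h2 | ⟨h2, _⟩) <;> omega
  · rw [h1]
    simp only [zero_mul, zero_add, lt_irrefl, false_or, true_and]
    constructor
    · intro h2
      rcases h.root_decomp _ hv with h3 | h3
      · exact h3
      · have := hg.pos _ h3
        rw [map_neg] at this; omega
    · exact hg.pos _
  · have : 1 * N ≤ v.2 * N := mul_le_mul_of_nonneg_right (by omega) hN.le
    constructor
    · intro; exact Or.inl h1
    · intro; linarith

theorem ht_ne {v : C.X × ℤ} (hv : v.1 ∈ C.roots) : ht η N v ≠ 0 := by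
  intro h0
  have hv' : (-v).1 ∈ C.roots := neg_root h hv
  have h1 := (ht_pos_iff h hg hv).not.1 (by omega)
  have h2 := (ht_pos_iff h hg hv').not.1 (by rw [ht_neg]; omega)
  simp only [Prod.snd_neg, Prod.fst_neg] at h2
  push Not at h1 h2
  have h3 : v.2 = 0 := by omega
  rcases h.root_decomp _ hv with h4 | h4
  · exact h1.2 h3 h4
  · exact h2.2 (by omega) h4

theorem hat_zero {v : C.X × ℤ} (hv : v.1 ∈ C.roots ∨ v.1 = 0) (h0 : ht η N v = 0) : v = 0 := by
  rcases hv with hv | hv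
  · exact absurd h0 (ht_ne h hg hv)
  · unfold ht at h0
    rw [hv, map_zero, add_zero] at h0
    have hN := hg.Npos
    rcases mul_eq_zero.1 h0 with h1 | h1
    · exact Prod.ext hv h1
    · omega

omit h hg in
/-- Positive (real or imaginary) affine roots. -/
def HP (η : C.Y) (N : ℤ) (v : C.X × ℤ) : Prop := (v.1 ∈ C.roots ∨ v.1 = 0) ∧ 0 < ht η N v

omit h hg in
/-- Simple affine roots. -/
def Sim (η : C.Y) (N : ℤ) (b : C.X × ℤ) : Prop :=
  b.1 ∈ C.roots ∧ 0 < ht η N b ∧ ¬ ∃ x y, HP η N x ∧ HP η N y ∧ b = x + y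

theorem sim_sub {b c : C.X × ℤ} (hb : Sim η N b) (hc : c.1 ∈ C.roots) (hcp : 0 < ht η N c)
    (hne : c ≠ b) (hp : 0 < C.pair (C.coroot b.1) c.1) : HP η N (c - b) := by
  have hs := root_sub h hb.1 hc hp
  refine ⟨hs, ?_⟩
  by_contra hle
  have h0 : ht η N (c - b) ≠ 0 := fun h0 => hne (sub_eq_zero.1 (hat_zero h hg hs h0))
  apply hb.2.2
  refine ⟨c, b - c, ⟨Or.inl hc, hcp⟩, ⟨?_, ?_⟩, by abel⟩
  · rcases hs with hs | hs
    · left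
      have := neg_root h hs
      rwa [neg_sub] at this
    · right
      rw [Prod.fst_sub, ← neg_sub, hs, neg_zero]
  · rw [← neg_sub, ht_neg]; omega

theorem sim_perm {b : C.X × ℤ} (hb : Sim η N b) (k : ℕ) : ∀ c : C.X × ℤ, c.1 ∈ C.roots →
    0 < ht η N c → c ≠ b → C.pair (C.coroot b.1) c.1 = k → 0 < ht η N (c - (k : ℤ) • b) := by
  induction k using Nat.strong_induction_on with
  | _ k ih =>
  intro c hc hcp hne hk
  rcases Nat.eq_zero_or_pos k with rfl | hk0
  · simpa using hcp
  by_contra hle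
  have hbb := h.coroot_self _ hb.1
  have hsc : (c - (k : ℤ) • b).1 ∈ C.roots := by
    have := act_root h (C.rf b) hc
    rwa [act_rf h hb.1, hk] at this
  have h0 := ht_ne h hg hsc
  set d := (k : ℤ) • b - c with hd
  have hdc : d = -(c - (k : ℤ) • b) := by rw [hd]; abel
  have hdr : d.1 ∈ C.roots := by rw [hdc]; exact neg_root h hsc
  have hdp : 0 < ht η N d := by rw [hdc, ht_neg]; omega
  have hdk : C.pair (C.coroot b.1) d.1 = k := by
    rw [hd, Prod.fst_sub, Prod.smul_fst, map_sub, map_zsmul, hbb, hk, smul_eq_mul]; ring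
  have hdne : d ≠ b := by
    intro e
    rw [e, hbb] at hdk
    rw [← hdk] at hd
    apply hne
    rw [e] at hd
    have : c = (2 : ℤ) • b - b := by nth_rw 2 [hd]; abel
    rw [this, two_smul]; abel
  have hc1 := sim_sub h hg hb hc hcp hne (by omega)
  have hd1 := sim_sub h hg hb hdr hdp hdne (by omega)
  have hsum : ht η N (c - b) + ht η N (d - b) = ((k : ℤ) - 2) * ht η N b := by
    rw [ht_sub, ht_sub, hd, ht_sub, ht_zsmul]; ring
  have hpos : 0 < ((k : ℤ) - 2) * ht η N b := by
    rw [← hsum]; exact add_pos hc1.2 hd1.2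
  have hk3 : 0 < (k : ℤ) - 2 := (mul_pos_iff_of_pos_right hb.2.1).1 hpos
  have hck : C.pair (C.coroot b.1) (c - b).1 = ((k - 2 : ℕ) : ℤ) := by
    rw [Prod.fst_sub, map_sub, hbb, hk]; omega
  have hcr : (c - b).1 ∈ C.roots := by
    rcases hc1.1 with h1 | h1
    · exact h1
    · rw [h1, map_zero] at hck; omega
  have hcne : c - b ≠ b := by
    intro e
    have e2 : c = (2 : ℤ) • b := by rw [two_smul]; exact sub_eq_iff_eq_add.1 e
    rw [e2] at hc
    rcases h.reduced _ hb.1 2 hc with h1 | h1 <;> omega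
  have := ih (k - 2) (by omega) (c - b) hcr hc1.2 hcne hck
  have e : c - b - ((k - 2 : ℕ) : ℤ) • b = -(d - b) := by
    rw [hd, Nat.cast_sub (by omega)]; push_cast; module
  rw [e, ht_neg] at this
  have := hd1.2
  omega

theorem sim_pos {b : C.X × ℤ} (hb : Sim η N b) (c : C.X × ℤ) (hc : c.1 ∈ C.roots)
    (hcp : 0 < ht η N c) (hne : c ≠ b) : 0 < ht η N (C.act (C.rf b) c) := by
  rw [act_rf h hb.1]
  rcases le_or_gt 0 (C.pair (C.coroot b.1) c.1) with hp | hp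
  · obtain ⟨k, hk⟩ := Int.eq_ofNat_of_zero_le hp
    rw [hk]
    exact sim_perm h hg hb k c hc hcp hne hk
  · rw [ht_sub, ht_zsmul]
    have := mul_neg_of_neg_of_pos hp hb.2.1
    omega

omit h hg in
theorem exists_sim (y : C.Y) (n : ℕ) : ∀ x : C.X × ℤ, HP η N x → ht η N x = n →
    0 < C.pair y x.1 → ∃ a, Sim η N a ∧ 0 < C.pair y a.1 := by
  induction n using Nat.strong_induction_on with
  | _ n ih =>
  intro x hx hn hp
  by_cases hdec : ∃ u v, HP η N u ∧ HP η N v ∧ x = u + v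
  · obtain ⟨u, v, hu, hv, rfl⟩ := hdec
    rw [ht_add] at hn
    have hu2 := hu.2
    have hv2 := hv.2
    rw [Prod.fst_add, map_add] at hp
    rcases lt_or_ge 0 (C.pair y u.1) with h1 | h1
    · exact ih (ht η N u).toNat (by omega) u hu (by omega) h1
    · exact ih (ht η N v).toNat (by omega) v hv (by omega) (by omega)
  · refine ⟨x, ⟨?_, hx.2, hdec⟩, hp⟩
    rcases hx.1 with h1 | h1
    · exact h1
    · rw [h1, map_zero] at hp; omega

theorem rf_mem (H : Subgroup C.Wext) (hH : ∀ a, Sim η N a → C.rf a ∈ H) (n : ℕ) :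
    ∀ b : C.X × ℤ, b.1 ∈ C.roots → ht η N b = n → C.rf b ∈ H := by
  induction n using Nat.strong_induction_on with
  | _ n ih =>
  intro b hb hn
  by_cases hs : Sim η N b
  · exact hH b hs
  have hbp : 0 < ht η N b := by
    have := ht_ne h hg hb
    omega
  obtain ⟨a, ha, hap⟩ := exists_sim (C.coroot b.1) n b ⟨Or.inl hb, hbp⟩ hn
    (by rw [h.coroot_self _ hb]; norm_num)
  have hp := pair_symm h hb ha.1 hap
  have hne : b ≠ a := fun e => hs (e ▸ ha)
  have h1 := sim_pos h hg ha b hb hbp hne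
  have h2 : ht η N (C.act (C.rf a) b) < ht η N b := by
    rw [act_rf h ha.1, ht_sub, ht_zsmul]
    have := mul_pos hp ha.2.1
    omega
  have h3 := ih (ht η N (C.act (C.rf a) b)).toNat (by omega) (C.act (C.rf a) b)
    (act_root h _ hb) (by omega)
  have h4 := rf_conj h (C.rf a) hb rfl
  have h5 : C.rf b = (C.rf a)⁻¹ * (C.rf (C.act (C.rf a) b) * C.rf a) := by
    rw [← h4]; group
  rw [h5]
  exact H.mul_mem (H.inv_mem (hH a ha)) (H.mul_mem h3 (hH a ha))

theorem rf_mem' (H : Subgroup C.Wext) (hH : ∀ a, Sim η N a → C.rf a ∈ H)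
    (b : C.X × ℤ) (hb : b.1 ∈ C.roots) : C.rf b ∈ H := by
  rcases le_or_gt 0 (ht η N b) with h1 | h1
  · exact rf_mem h hg H hH (ht η N b).toNat b hb (by omega)
  · rw [← rf_neg h hb]
    exact rf_mem h hg H hH (- ht η N b).toNat (-b) (neg_root h hb) (by rw [ht_neg]; omega)

omit hg in
theorem sigma_eq (w : C.W) (α : C.X) (hα : α ∈ C.roots)
    (hw : ∀ x : C.X, w • x = x - C.pair (C.coroot α) x • α) : C.σ w = C.rf (α, 0) := by
  apply act_faithful h
  intro v
  rw [act_rf h (b := (α, 0)) hα]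
  ext
  · simp [act, σ, hw]
  · simp [act, σ]

omit hg in
theorem t_eq (α : C.X) (hα : α ∈ C.roots) :
    C.t (C.coroot α) = C.rf (α, 1) * C.rf (α, 0) := by
  apply act_faithful h
  intro v
  rw [act_mul h, act_rf h (b := (α, 0)) hα, act_rf h (b := (α, 1)) hα]
  ext
  · simp [act, t, h.coroot_self _ hα]
    module
  · simp [act, t, h.coroot_self _ hα]
    ring

omit hg in
theorem Waff_le (H : Subgroup C.Wext)
    (hH : ∀ b : C.X × ℤ, b.1 ∈ C.roots → C.rf b ∈ H) : C.Waff ≤ H := by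
  unfold Waff
  rw [Subgroup.closure_le]
  rintro g (⟨l, hl, rfl⟩ | ⟨w, rfl⟩)
  · change C.t l ∈ H
    have hl' : l ∈ AddSubgroup.closure (C.coroot '' ↑C.roots) := hl
    induction hl' using AddSubgroup.closure_induction with
    | mem x hx =>
      obtain ⟨α, hα, rfl⟩ := hx
      rw [t_eq h α hα]
      exact H.mul_mem (hH _ hα) (hH _ hα)
    | zero => exact H.one_mem
    | add x y hx hy ihx ihy =>
      have e : C.t (x + y) = C.t x * C.t y := by simp [t]
      rw [e]; exact H.mul_mem (ihx hx) (ihy hy)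
    | neg x hx ih =>
      have e : C.t (-x) = (C.t x)⁻¹ := by simp [t]
      rw [e]; exact H.inv_mem (ih hx)
  · have hw := h.weyl_gen w
    change C.σ w ∈ H
    induction hw using Subgroup.closure_induction with
    | mem x hx =>
      obtain ⟨α, hα, h1, _⟩ := hx
      rw [sigma_eq h x α hα h1]
      exact hH _ hα
    | one => exact H.one_mem
    | mul x y _ _ ihx ihy =>
      have e : C.σ (x * y) = C.σ x * C.σ y := by simp [σ]
      rw [e]; exact H.mul_mem ihx ihy
    | inv x _ ih =>
      have e : C.σ x⁻¹ = (C.σ x)⁻¹ := by simp [σ]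
      rw [e]; exact H.inv_mem ih

omit h hg in
theorem rf_mem_Waff (b : C.X × ℤ) (hb : b.1 ∈ C.roots) : C.rf b ∈ C.Waff := by
  have e : C.rf b = C.t (b.2 • C.coroot b.1) * C.σ (C.wr b.1) := by
    exact SemidirectProduct.mk_eq_inl_mul_inr _ _
  rw [e]
  apply Subgroup.mul_mem
  · apply Subgroup.subset_closure
    left
    exact ⟨_, C.corootLattice.zsmul_mem (AddSubgroup.subset_closure ⟨_, hb, rfl⟩) _, rfl⟩
  · apply Subgroup.subset_closure
    right
    exact ⟨_, rfl⟩

end Affine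
end Ctx
end SemiInf
namespace SemiInf
namespace Ctx

section Length

variable {C : Ctx} (h : C.IsRootDatum)

/-- Inversions above the pair of roots `±α`. -/
def fib (C : Ctx) (g : C.Wext) (α : C.X) : Finset (C.X × ℤ) :=
  let e : ℤ := if g.right • α ∈ C.pos then 0 else 1
  let m : ℤ := C.pair (g.right⁻¹ • Multiplicative.toAdd g.left) α
  ((Finset.Ico 0 (e - m)).image fun n => (α, n)) ∪
    ((Finset.Ico 1 (m + 1 - e)).image fun n => (-α, n))

theorem mem_fib (g : C.Wext) (α : C.X) (b : C.X × ℤ) : b ∈ C.fib g α ↔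
    (b.1 = α ∧ 0 ≤ b.2 ∧ b.2 < (if g.right • α ∈ C.pos then 0 else 1) -
      C.pair (g.right⁻¹ • Multiplicative.toAdd g.left) α) ∨
    (b.1 = -α ∧ 1 ≤ b.2 ∧ b.2 < C.pair (g.right⁻¹ • Multiplicative.toAdd g.left) α + 1 -
      (if g.right • α ∈ C.pos then 0 else 1)) := by
  obtain ⟨x, n⟩ := b
  simp only [fib, Finset.mem_union, Finset.mem_image, Finset.mem_Ico, Prod.mk.injEq]
  constructor
  · rintro (⟨k, ⟨h1, h2⟩, rfl, rfl⟩ | ⟨k, ⟨h1, h2⟩, rfl, rfl⟩)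
    · exact Or.inl ⟨rfl, h1, h2⟩
    · exact Or.inr ⟨rfl, h1, h2⟩
  · rintro (⟨rfl, h1, h2⟩ | ⟨rfl, h1, h2⟩)
    · exact Or.inl ⟨n, ⟨h1, h2⟩, rfl, rfl⟩
    · exact Or.inr ⟨n, ⟨h1, h2⟩, rfl, rfl⟩

include h

theorem card_fib (g : C.Wext) (α : C.X) (hα : α ∈ C.pos) : (C.fib g α).card =
    if g.right • α ∈ C.pos
      then (C.pair (g.right⁻¹ • Multiplicative.toAdd g.left) α).natAbs
      else ((1 : ℤ) - C.pair (g.right⁻¹ • Multiplicative.toAdd g.left) α).natAbs := by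
  unfold fib
  simp only
  rw [Finset.card_union_of_disjoint, Finset.card_image_of_injective,
    Finset.card_image_of_injective, Int.card_Ico, Int.card_Ico]
  · split_ifs <;> omega
  · intro a b hab; exact (Prod.mk.inj hab).2
  · intro a b hab; exact (Prod.mk.inj hab).2
  · rw [Finset.disjoint_left]
    intro b h1 h2
    obtain ⟨k, _, rfl⟩ := Finset.mem_image.1 h1
    obtain ⟨l, _, e⟩ := Finset.mem_image.1 h2
    have := (Prod.mk.inj e).1
    apply h.pos_neg_disjoint α hα
    rw [this]; exact hα

omit h in
/-- The inversion set. -/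
def Inv (C : Ctx) (g : C.Wext) : Finset (C.X × ℤ) := C.pos.biUnion (C.fib g)

theorem card_Inv (g : C.Wext) : (C.Inv g).card = C.len g := by
  unfold Inv len
  rw [Finset.card_biUnion]
  · exact Finset.sum_congr rfl fun α hα => card_fib h g α hα
  · intro α hα β hβ hne
    rw [Function.onFun, Finset.disjoint_left]
    intro b h1 h2
    rw [mem_fib] at h1 h2
    rcases h1 with ⟨h1, _⟩ | ⟨h1, _⟩ <;> rcases h2 with ⟨h2, _⟩ | ⟨h2, _⟩
    · exact hne (h1.symm.trans h2)
    · apply h.pos_neg_disjoint β hβ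
      rw [← h2, h1]; exact hα
    · apply h.pos_neg_disjoint α hα
      rw [← h1, h2]; exact hβ
    · exact hne (neg_injective (h1.symm.trans h2))

variable {η : C.Y} {N : ℤ} (hg : C.Good η N)
include hg

omit hg in
theorem pos_neg_iff {α : C.X} (hα : α ∈ C.roots) : -α ∈ C.pos ↔ α ∉ C.pos := by
  constructor
  · intro h1 h2; exact h.pos_neg_disjoint α h2 h1
  · intro h1; exact (h.root_decomp α hα).resolve_left h1

theorem mem_Inv (g : C.Wext) (b : C.X × ℤ) : b ∈ C.Inv g ↔
    b.1 ∈ C.roots ∧ 0 < ht η N b ∧ ¬ 0 < ht η N (C.act g b) := by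
  have hpair : ∀ x, C.pair (g.right⁻¹ • Multiplicative.toAdd g.left) x =
      C.pair (Multiplicative.toAdd g.left) (g.right • x) := by
    intro x
    have := h.pair_inv g.right (g.right⁻¹ • Multiplicative.toAdd g.left) x
    rw [smul_inv_smul] at this
    exact this.symm
  have key : ∀ hb : b.1 ∈ C.roots, (0 < ht η N b ∧ ¬ 0 < ht η N (C.act g b)) ↔
      ((0 < b.2 ∨ (b.2 = 0 ∧ b.1 ∈ C.pos)) ∧
      ¬ (0 < b.2 + C.pair (Multiplicative.toAdd g.left) (g.right • b.1) ∨
        (b.2 + C.pair (Multiplicative.toAdd g.left) (g.right • b.1) = 0 ∧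
          g.right • b.1 ∈ C.pos))) := by
    intro hb
    rw [ht_pos_iff h hg hb, ht_pos_iff h hg (act_root h g hb)]
    rfl
  unfold Inv
  simp only [Finset.mem_biUnion, mem_fib]
  constructor
  · rintro ⟨α, hα, ⟨h1, h2, h3⟩ | ⟨h1, h2, h3⟩⟩
    · have hb : b.1 ∈ C.roots := by rw [h1]; exact h.pos_subset hα
      refine ⟨hb, (key hb).2 ?_⟩
      rw [hpair] at h3
      subst h1
      simp only [hα, and_true]
      split_ifs at h3 with h4 <;> simp only [h4, and_true, and_false, or_false] <;> omega
    · have hα' := h.pos_subset hα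
      have hb : b.1 ∈ C.roots := by rw [h1]; exact neg_root h hα'
      refine ⟨hb, (key hb).2 ?_⟩
      rw [hpair] at h3
      have h5 := pos_neg_iff h (h.roots_stable g.right _ hα')
      rw [h1, smul_neg, map_neg, h5]
      split_ifs at h3 with h4 <;>
        simp only [h4, not_true, not_false_iff, and_true, and_false, or_false] <;> omega
  · rintro ⟨hb, h1⟩
    rw [key hb] at h1
    rcases h.root_decomp _ hb with h2 | h2
    · refine ⟨b.1, h2, Or.inl ⟨rfl, ?_⟩⟩
      simp only [h2, and_true] at h1
      rw [hpair]
      split_ifs with h4 <;> simp only [h4, and_true, and_false, or_false] at h1 <;> omega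
    · refine ⟨-b.1, h2, Or.inr ⟨by rw [neg_neg], ?_⟩⟩
      have h3 : b.1 ∉ C.pos := (pos_neg_iff h hb).1 h2
      have h5 := pos_neg_iff h (h.roots_stable g.right _ hb)
      rw [hpair, smul_neg, map_neg]
      simp only [h3, and_false, or_false] at h1
      by_cases h4 : g.right • b.1 ∈ C.pos <;>
        simp only [h5, h4, not_true, not_false_iff, if_true, if_false, and_true, and_false,
          or_false] at h1 ⊢ <;> omega

theorem len_up (g : C.Wext) {b : C.X × ℤ} (hb : Sim η N b) (hp : 0 < ht η N (C.act g b)) :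
    C.len (g * C.rf b) = C.len g + 1 := by
  rw [← card_Inv h, ← card_Inv h]
  have hinv : ∀ c, C.act (C.rf b) (C.act (C.rf b) c) = c := by
    intro c; rw [← act_mul h, rf_sq h hb.1, act_one]
  have hbn : C.act (C.rf b) b = -b := rf_self h hb.1
  have e : C.Inv (g * C.rf b) = insert b ((C.Inv g).image (C.act (C.rf b))) := by
    ext c
    rw [Finset.mem_insert, Finset.mem_image, mem_Inv h hg, act_mul h]
    constructor
    · rintro ⟨h1, h2, h3⟩
      by_cases hc : c = b
      · exact Or.inl hc
      · right
        refine ⟨C.act (C.rf b) c, ?_, hinv c⟩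
        rw [mem_Inv h hg]
        exact ⟨act_root h _ h1, sim_pos h hg hb c h1 h2 hc, h3⟩
    · rintro (rfl | ⟨d, hd, rfl⟩)
      · refine ⟨hb.1, hb.2.1, ?_⟩
        rw [hbn, act_neg, ht_neg]; omega
      · rw [mem_Inv h hg] at hd
        obtain ⟨h1, h2, h3⟩ := hd
        have hne : d ≠ b := fun e => h3 (e ▸ hp)
        rw [hinv]
        exact ⟨act_root h _ h1, sim_pos h hg hb d h1 h2 hne, h3⟩
  rw [e, Finset.card_insert_of_notMem, Finset.card_image_of_injective]
  · exact Function.LeftInverse.injective hinv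
  · intro hm
    obtain ⟨d, hd, e⟩ := Finset.mem_image.1 hm
    have : d = -b := by rw [← hinv d, e, hbn]
    rw [mem_Inv h hg, this, ht_neg] at hd
    have := hb.2.1
    omega

theorem len_dn (g : C.Wext) {b : C.X × ℤ} (hb : Sim η N b) (hp : ¬ 0 < ht η N (C.act g b)) :
    C.len g = C.len (g * C.rf b) + 1 := by
  rw [← len_up h hg (g * C.rf b) hb, mul_assoc, rf_sq h hb.1, mul_one]
  rw [act_mul h, rf_self h hb.1, act_neg, ht_neg]
  have := ht_ne h hg (act_root h g hb.1)
  omega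

omit h hg in
theorem len_one' : C.len 1 = 0 := by
  unfold len
  apply Finset.sum_eq_zero
  intro α hα
  simp [hα]

theorem rf_inj {a b : C.X × ℤ} (ha : Sim η N a) (hb : Sim η N b) (e : C.rf a = C.rf b) :
    a = b := by
  by_contra hne
  have h1 := sim_pos h hg hb a ha.1 ha.2.1 hne
  rw [← e, rf_self h ha.1, ht_neg] at h1
  have := ha.2.1
  omega

/-- The exchange data of the affine Weyl group. -/
def exch : ExchData C.Waff {b : C.X × ℤ // Sim η N b} (C.X × ℤ) where
  s b := ⟨C.rf b, rf_mem_Waff _ b.2.1⟩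
  a b := b
  act g v := C.act g v
  Pos := {v | v.1 ∈ C.roots ∧ 0 < ht η N v}
  len g := C.len g
  act_one x := act_one x
  act_mul g k x := act_mul h g k x
  s_sq b := Subtype.ext (rf_sq h b.2.1)
  a_pos b := ⟨b.2.1, b.2.2.1⟩
  s_pos b c hc hne := ⟨act_root h _ hc.1, sim_pos h hg b.2 c hc.1 hc.2 hne⟩
  conj g i j e := Subtype.ext (rf_conj h g i.2.1 e)
  len_one := len_one'
  len_up g i hp := len_up h hg g i.2 hp.2
  len_dn g i hp := len_dn h hg g i.2 fun h1 => hp ⟨act_root h _ i.2.1, h1⟩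
  gen := by
    have h1 : C.Waff ≤ (Subgroup.closure (Set.range fun b : {b : C.X × ℤ // Sim η N b} =>
        (⟨C.rf b, rf_mem_Waff _ b.2.1⟩ : C.Waff))).map C.Waff.subtype := by
      apply Waff_le h
      apply rf_mem' h hg
      intro a ha
      exact ⟨_, Subgroup.subset_closure ⟨⟨a, ha⟩, rfl⟩, rfl⟩
    rw [eq_top_iff]
    rintro ⟨g, hgW⟩ _
    obtain ⟨k, hk, e⟩ := h1 hgW
    have : k = ⟨g, hgW⟩ := Subtype.ext e
    rw [← this]; exact hk
  inj i j e := Subtype.ext (rf_inj h hg i.2 j.2 (congrArg Subtype.val e))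

end Length
end Ctx
end SemiInf

/-- There is a subset `S_aff ⊆ W_aff` making `(W_aff, S_aff)` a Coxeter system
whose length function is the restriction of `ℓ` to `W_aff`. -/
theorem statement0 (C : SemiInf.Ctx) (h : C.IsRootDatum) :
    ∃ S : Set C.Waff, ∃ (B : Type) (M : CoxeterMatrix B) (cs : CoxeterSystem M C.Waff),
      Set.range cs.simple = S ∧ ∀ g : C.Waff, cs.length g = C.len (g : C.Wext) := by
  obtain ⟨η, N, hg⟩ := SemiInf.Ctx.exists_good h
  exact ⟨_, _, _, (SemiInf.Ctx.exch h hg).cs, rfl, (SemiInf.Ctx.exch h hg).cs_length⟩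
end
end

section
/- Let λ ∈ Y. Among the elements v ∈ W_f with v(λ) ∈ Y₊ there is a unique element v_λ of minimal length; the element w_λ := t_λ v_λ⁻¹ is the unique element of minimal length in the coset t_λ W_f, and ℓ(w_λ) = ℓ(t_λ) − ℓ(v_λ). -/
open scoped Classical TensorProduct

noncomputable section

namespace SemiInf
namespace Ctx

/-- the reflection attached to a root -/
def srefl (C : Ctx) (α : C.X) : C.W := Classical.epsilon fun s : C.W =>
    (∀ x : C.X, s • x = x - C.pair (C.coroot α) x • α) ∧
    (∀ y : C.Y, s • y = y - C.pair y α • C.coroot α)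

variable {C : Ctx}

theorem srefl_spec (h : C.IsRootDatum) {α : C.X} (hα : α ∈ C.roots) :
    (∀ x : C.X, C.srefl α • x = x - C.pair (C.coroot α) x • α) ∧
    (∀ y : C.Y, C.srefl α • y = y - C.pair y α • C.coroot α) :=
  Classical.epsilon_spec (h.isReflection α hα)

theorem eq_of_smul_X (h : C.IsRootDatum) {u v : C.W} (e : ∀ x : C.X, u • x = v • x) : u = v := by
  have := h.faithful_X (v⁻¹ * u) (fun x => by rw [mul_smul, e, inv_smul_smul])
  rw [inv_mul_eq_one] at this
  exact this.symm

theorem srefl_conj (h : C.IsRootDatum) {α : C.X} (hα : α ∈ C.roots) (w : C.W) :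
    C.srefl (w • α) = w * C.srefl α * w⁻¹ := by
  apply eq_of_smul_X h
  intro x
  rw [(srefl_spec h (h.roots_stable w α hα)).1, mul_smul, mul_smul, (srefl_spec h hα).1,
    ← h.smul_coroot w α hα, smul_sub, smul_inv_smul]
  have : C.pair (w • C.coroot α) x = C.pair (C.coroot α) (w⁻¹ • x) := by
    conv_lhs => rw [← smul_inv_smul w x]
    rw [h.pair_inv]
  rw [this]
  congr 1
  exact (map_zsmul (DistribMulAction.toAddMonoidHom C.X w) _ _).symm

theorem srefl_self_smul (h : C.IsRootDatum) {α : C.X} (hα : α ∈ C.roots) :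
    C.srefl α • α = -α := by
  rw [(srefl_spec h hα).1, h.coroot_self α hα, two_zsmul]; abel

theorem srefl_mul_self (h : C.IsRootDatum) {α : C.X} (hα : α ∈ C.roots) :
    C.srefl α * C.srefl α = 1 := by
  apply eq_of_smul_X h
  intro x
  rw [mul_smul, one_smul, (srefl_spec h hα).1, (srefl_spec h hα).1]
  simp only [map_sub, map_zsmul, h.coroot_self α hα, smul_eq_mul]
  module

theorem not_pos (h : C.IsRootDatum) {α : C.X} (hα : α ∈ C.roots) :
    α ∉ C.pos ↔ -α ∈ C.pos := by
  constructor
  · intro h1; exact (h.root_decomp α hα).resolve_left h1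
  · intro h1 h2; exact h.pos_neg_disjoint α h2 h1

/-- `S` generates the rational positive cone. -/
def Gen (C : Ctx) (S : Set C.X) : Prop :=
  ∀ β ∈ C.pos, ∃ n : ℕ, 0 < n ∧ n • β ∈ AddSubmonoid.closure S

theorem mem_closure_split {S : Set C.X} (γ x : C.X) (hx : x ∈ AddSubmonoid.closure S) :
    ∃ k : ℕ, ∃ y ∈ AddSubmonoid.closure (S \ {γ}), x = k • γ + y := by
  induction hx using AddSubmonoid.closure_induction with
  | mem x hx =>
    by_cases e : x = γ
    · exact ⟨1, 0, zero_mem _, by simp [e]⟩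
    · exact ⟨0, x, AddSubmonoid.subset_closure ⟨hx, e⟩, by simp⟩
  | zero => exact ⟨0, 0, zero_mem _, by simp⟩
  | add x y _ _ hx hy =>
    obtain ⟨k, a, ha, rfl⟩ := hx
    obtain ⟨m, b, hb, rfl⟩ := hy
    exact ⟨k + m, a + b, add_mem ha hb, by rw [add_smul]; abel⟩

theorem closure_pos {S : Set C.X} (hS : S ⊆ C.pos) {η : C.Y} (hη : ∀ α ∈ C.pos, 0 < C.pair η α)
    {x : C.X} (hx : x ∈ AddSubmonoid.closure S) : x = 0 ∨ 0 < C.pair η x := by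
  induction hx using AddSubmonoid.closure_induction with
  | mem x hx => exact Or.inr (hη x (hS hx))
  | zero => exact Or.inl rfl
  | add x y _ _ hx hy =>
    rcases hx with rfl | hx
    · simpa using hy
    · rcases hy with rfl | hy
      · right; simpa using hx
      · right; rw [map_add]; omega

theorem closure_nonpos {S : Set C.X} {y : C.Y} (hy : ∀ α ∈ S, C.pair y α ≤ 0)
    {x : C.X} (hx : x ∈ AddSubmonoid.closure S) : C.pair y x ≤ 0 := by
  induction hx using AddSubmonoid.closure_induction with
  | mem x hx => exact hy x hx
  | zero => simp
  | add x z _ _ hx hz => rw [map_add]; omega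

/-- A minimal generating set of the cone. -/
def IsBase (C : Ctx) (D : Set C.X) : Prop :=
  D ⊆ C.pos ∧ C.Gen D ∧ ∀ γ ∈ D, ∀ n : ℕ, 0 < n → n • γ ∉ AddSubmonoid.closure (D \ {γ})

theorem exists_base (C : Ctx) : ∃ D : Set C.X, C.IsBase D := by
  have hne : (C.pos.powerset.filter fun S : Finset C.X => C.Gen (S : Set C.X)).Nonempty := by
    refine ⟨C.pos, ?_⟩
    simp only [Finset.mem_filter, Finset.mem_powerset, subset_refl, true_and]
    intro β hβ
    exact ⟨1, one_pos, by rw [one_smul]; exact AddSubmonoid.subset_closure hβ⟩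
  obtain ⟨D, hD, hmin⟩ := Finset.exists_min_image _ Finset.card hne
  simp only [Finset.mem_filter, Finset.mem_powerset] at hD hmin
  refine ⟨D, by exact_mod_cast hD.1, hD.2, ?_⟩
  intro γ hγ n hn hc
  have hγ' : γ ∈ D := hγ
  have := hmin (D.erase γ) ⟨(Finset.erase_subset _ _).trans hD.1, ?_⟩
  · have := Finset.card_erase_lt_of_mem hγ'
    omega
  · intro β hβ
    obtain ⟨m, hm, hmem⟩ := hD.2 β hβ
    obtain ⟨k, y, hy, e⟩ := mem_closure_split γ _ hmem
    refine ⟨n * m, Nat.mul_pos hn hm, ?_⟩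
    rw [Finset.coe_erase, mul_smul, e, smul_add, smul_comm]
    exact add_mem (nsmul_mem hc _) (nsmul_mem hy _)

theorem IsBase.coef (h : C.IsRootDatum) {D : Set C.X} (hD : C.IsBase D) {γ : C.X} (hγ : γ ∈ D)
    {N : ℤ} {z : C.X} (hz : z ∈ AddSubmonoid.closure (D \ {γ})) (e : N • γ = z) : N ≤ 0 := by
  by_contra hN
  push Not at hN
  obtain ⟨n, rfl⟩ := Int.eq_ofNat_of_zero_le hN.le
  apply hD.2.2 γ hγ n (by exact_mod_cast hN)
  rw [← e] at hz
  simpa using hz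

theorem IsBase.pair_nonpos (h : C.IsRootDatum) {D : Set C.X} (hD : C.IsBase D) {α β : C.X}
    (hα : α ∈ D) (hβ : β ∈ D) (hne : β ≠ α) : C.pair (C.coroot α) β ≤ 0 := by
  by_contra ha
  push Not at ha
  obtain ⟨η, hη⟩ := h.exists_regular_Y
  have hαr := h.pos_subset (hD.1 hα)
  have hβr := h.pos_subset (hD.1 hβ)
  have ea := hη α (hD.1 hα)
  have eb := hη β (hD.1 hβ)
  have hr := h.roots_stable (C.srefl α) β hβr
  rw [(srefl_spec h hαr).1] at hr
  obtain ⟨a, haa⟩ := Int.eq_ofNat_of_zero_le ha.le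
  rw [haa] at hr ha
  have ha' : 0 < a := by exact_mod_cast ha
  rcases h.root_decomp _ hr with hp | hp
  · obtain ⟨n, hn, hmem⟩ := hD.2.1 _ hp
    obtain ⟨k, x, hx, e⟩ := mem_closure_split β _ hmem
    have hz : (n * a) • α + x ∈ AddSubmonoid.closure (D \ {β}) :=
      add_mem (nsmul_mem (AddSubmonoid.subset_closure (show α ∈ D \ {β} from ⟨hα, hne.symm⟩)) _) hx
    have e2 : ((n : ℤ) - k) • β = (n * a) • α + x := by
      have : x = n • (β - (a : ℤ) • α) - k • β := by rw [e]; abel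
      rw [this]; module
    have h1 := IsBase.coef h hD hβ hz e2
    have h2 := congrArg (C.pair η) e2
    rw [map_add, map_zsmul, map_nsmul] at h2
    simp only [smul_eq_mul, nsmul_eq_mul] at h2
    have h3 : 0 ≤ C.pair η x := by
      rcases closure_pos (Set.sdiff_subset.trans hD.1) hη hx with rfl | h' <;> simp [*, le_of_lt]
    have h4 : (0:ℤ) < ((n * a : ℕ) : ℤ) * C.pair η α :=
      mul_pos (by exact_mod_cast Nat.mul_pos hn ha') ea
    nlinarith
  · obtain ⟨n, hn, hmem⟩ := hD.2.1 _ hp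
    obtain ⟨k, x, hx, e⟩ := mem_closure_split α _ hmem
    have hz : n • β + x ∈ AddSubmonoid.closure (D \ {α}) :=
      add_mem (nsmul_mem (AddSubmonoid.subset_closure (show β ∈ D \ {α} from ⟨hβ, hne⟩)) _) hx
    have e2 : ((n : ℤ) * a - k) • α = n • β + x := by
      have : x = n • (-(β - (a : ℤ) • α)) - k • α := by rw [e]; abel
      rw [this]; module
    have h1 := IsBase.coef h hD hα hz e2
    have h2 := congrArg (C.pair η) e2
    rw [map_add, map_zsmul, map_nsmul] at h2
    simp only [smul_eq_mul, nsmul_eq_mul] at h2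
    have h3 : 0 ≤ C.pair η x := by
      rcases closure_pos (Set.sdiff_subset.trans hD.1) hη hx with rfl | h' <;> simp [*, le_of_lt]
    have h4 : (0:ℤ) < (n : ℤ) * C.pair η β := mul_pos (by exact_mod_cast hn) eb
    nlinarith

theorem eq_of_nsmul (h : C.IsRootDatum) {n : ℕ} (hn : 0 < n) {x y : C.X} (e : n • x = n • y) :
    x = y := by
  apply h.perfect_right.1
  ext z
  have := congrArg (C.pair z) e
  simp only [map_nsmul, nsmul_eq_mul] at this
  exact mul_left_cancel₀ (by exact_mod_cast hn.ne') this

theorem eq_of_prop (h : C.IsRootDatum) {α β : C.X} (hα : α ∈ C.roots) (hβ : β ∈ C.roots)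
    {n k : ℕ} (hn : 0 < n) (e : n • β = k • α) : β = α := by
  have h1 := congrArg (C.pair (C.coroot α)) e
  have h2 := congrArg (C.pair (C.coroot β)) e
  simp only [map_nsmul, nsmul_eq_mul, h.coroot_self α hα, h.coroot_self β hβ] at h1 h2
  generalize C.pair (C.coroot α) β = a at h1
  generalize C.pair (C.coroot β) α = b at h2
  have hn' : (0:ℤ) < n := by exact_mod_cast hn
  have hk' : (0:ℤ) < k := by
    rcases Nat.eq_zero_or_pos k with rfl | hk
    · simp at h2; omega
    · exact_mod_cast hk
  have hab : a * b = 4 := by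
    have : (n:ℤ) * (a * b) = n * 4 := by linear_combination b * h1 - 2 * h2
    exact mul_left_cancel₀ hn'.ne' this
  have ha : 0 < a := by
    by_contra hc
    push Not at hc
    nlinarith
  have hb : 0 < b := by
    by_contra hc
    push Not at hc
    nlinarith
  have ha4 : a ≤ 4 := by nlinarith
  interval_cases a
  · have : n = 2 * k := by omega
    have e' : α = (2:ℤ) • β := by
      have hk : 0 < k := by omega
      apply eq_of_nsmul h hk
      rw [← e, this]; module
    have := h.reduced β hβ 2 (e' ▸ hα)
    omega
  · have : n = k := by omega
    subst this
    exact eq_of_nsmul h hn e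
  · omega
  · have : k = 2 * n := by omega
    have e' : β = (2:ℤ) • α := by
      apply eq_of_nsmul h hn
      rw [e, this]; module
    have := h.reduced α hα 2 (e' ▸ hβ)
    omega

theorem IsBase.simple (h : C.IsRootDatum) {D : Set C.X} (hD : C.IsBase D) {α β : C.X}
    (hα : α ∈ D) (hβ : β ∈ C.pos) (hneg : -(C.srefl α • β) ∈ C.pos) : β = α := by
  obtain ⟨η, hη⟩ := h.exists_regular_Y
  have hαr := h.pos_subset (hD.1 hα)
  have hβr := h.pos_subset hβ
  rw [(srefl_spec h hαr).1] at hneg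
  generalize C.pair (C.coroot α) β = c at hneg
  obtain ⟨n, hn, hmem⟩ := hD.2.1 _ hβ
  obtain ⟨k, x, hx, e⟩ := mem_closure_split α _ hmem
  obtain ⟨m, hm, hmem'⟩ := hD.2.1 _ hneg
  obtain ⟨j, y, hy, e'⟩ := mem_closure_split α _ hmem'
  have hz : m • x + n • y ∈ AddSubmonoid.closure (D \ {α}) :=
    add_mem (nsmul_mem hx _) (nsmul_mem hy _)
  have e2 : ((n : ℤ) * m * c - m * k - n * j) • α = m • x + n • y := by
    have e3 : x = n • β - k • α := by rw [e]; abel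
    have e4 : y = m • (-(β - c • α)) - j • α := by rw [e']; abel
    rw [e3, e4]; module
  have h1 := IsBase.coef h hD hα hz e2
  have h2 := congrArg (C.pair η) e2
  simp only [map_add, map_zsmul, map_nsmul, smul_eq_mul, nsmul_eq_mul] at h2
  have hm' : (0:ℤ) < m := by exact_mod_cast hm
  have hn' : (0:ℤ) < n := by exact_mod_cast hn
  have h4 : 0 ≤ C.pair η y := by
    rcases closure_pos (Set.sdiff_subset.trans hD.1) hη hy with rfl | h' <;> simp [*, le_of_lt]
  have ea := hη α (hD.1 hα)
  rcases closure_pos (Set.sdiff_subset.trans hD.1) hη hx with rfl | h3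
  · rw [add_zero] at e
    exact eq_of_prop h hαr hβr hn e
  · have := mul_pos hm' h3
    have := mul_nonneg hn'.le h4
    nlinarith

/-- simple reflections -/
def Simp (C : Ctx) (D : Set C.X) : Set C.W := C.srefl '' D

theorem IsBase.root_mem (h : C.IsRootDatum) {D : Set C.X} (hD : C.IsBase D) {β : C.X}
    (hβ : β ∈ C.pos) : C.srefl β ∈ Subgroup.closure (C.Simp D) := by
  obtain ⟨ξ, hξ⟩ := h.exists_regular_X
  have key : ∀ N : ℕ, ∀ β ∈ C.pos, (C.pair (C.coroot β) ξ).toNat = N →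
      C.srefl β ∈ Subgroup.closure (C.Simp D) := by
    intro N
    induction N using Nat.strong_induction_on with
    | _ N ih =>
    intro β hβ hN
    by_cases hβD : β ∈ D
    · exact Subgroup.subset_closure ⟨β, hβD, rfl⟩
    have hβr := h.pos_subset hβ
    obtain ⟨α, hα, hp⟩ : ∃ α ∈ D, 0 < C.pair (C.coroot β) α := by
      by_contra hc
      push Not at hc
      obtain ⟨n, hn, hmem⟩ := hD.2.1 β hβ
      have := closure_nonpos hc hmem
      rw [map_nsmul, h.coroot_self β hβr, nsmul_eq_mul] at this
      omega
    have hαr := h.pos_subset (hD.1 hα)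
    have hr := h.roots_stable (C.srefl α) β hβr
    have hpos : C.srefl α • β ∈ C.pos := by
      by_contra hc
      rw [not_pos h hr] at hc
      exact hβD (IsBase.simple h hD hα hβ hc ▸ hα)
    have hs : C.srefl α ∈ Subgroup.closure (C.Simp D) := Subgroup.subset_closure ⟨α, hα, rfl⟩
    have hlt : C.pair (C.coroot (C.srefl α • β)) ξ < C.pair (C.coroot β) ξ := by
      rw [← h.smul_coroot _ β hβr, (srefl_spec h hαr).2]
      simp only [map_sub, map_zsmul, AddMonoidHom.sub_apply, AddMonoidHom.coe_smul,
        Pi.smul_apply, smul_eq_mul]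
      have := mul_pos hp (hξ α (hD.1 hα))
      omega
    have h1 := hξ _ hpos
    have := ih _ (by omega) (C.srefl α • β) hpos rfl
    rw [srefl_conj h hβr] at this
    have h2 := mul_mem (mul_mem (inv_mem hs) this) hs
    have h3 : (C.srefl α)⁻¹ * (C.srefl α * C.srefl β * (C.srefl α)⁻¹) * C.srefl α = C.srefl β := by
      group
    rwa [h3] at h2
  exact key _ β hβ rfl

theorem srefl_neg (h : C.IsRootDatum) {α : C.X} (hα : α ∈ C.roots) :
    C.srefl (-α) = C.srefl α := by
  rw [← srefl_self_smul h hα, srefl_conj h hα, mul_inv_cancel_right]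

theorem IsBase.mem_closure (h : C.IsRootDatum) {D : Set C.X} (hD : C.IsBase D) (w : C.W) :
    w ∈ Subgroup.closure (C.Simp D) := by
  refine (Subgroup.closure_le _).2 ?_ (h.weyl_gen w)
  rintro s ⟨α, hα, hs, -⟩
  have e : s = C.srefl α := eq_of_smul_X h fun x => by rw [hs, (srefl_spec h hα).1]
  rw [e]
  rcases h.root_decomp α hα with hp | hp
  · exact IsBase.root_mem h hD hp
  · rw [← srefl_neg h hα]
    exact IsBase.root_mem h hD hp

theorem IsBase.exists_word (h : C.IsRootDatum) {D : Set C.X} (hD : C.IsBase D) (w : C.W) :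
    ∃ L : List C.W, (∀ s ∈ L, s ∈ C.Simp D) ∧ L.prod = w := by
  have hw := IsBase.mem_closure h hD w
  rw [← Subgroup.mem_toSubmonoid, Subgroup.closure_toSubmonoid] at hw
  have e : C.Simp D ∪ (C.Simp D)⁻¹ = C.Simp D := by
    apply Set.union_eq_self_of_subset_right
    rintro s ⟨α, hα, e⟩
    refine ⟨α, hα, ?_⟩
    have := srefl_mul_self h (h.pos_subset (hD.1 hα))
    rw [e, mul_eq_one_iff_eq_inv, inv_inv] at this
    rw [e, this]
  rw [e] at hw
  exact Submonoid.exists_list_of_mem_closure hw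

theorem IsBase.exchange (h : C.IsRootDatum) {D : Set C.X} (hD : C.IsBase D) {α : C.X}
    (hα : α ∈ D) (L : List C.W) (hL : ∀ s ∈ L, s ∈ C.Simp D) (hneg : -(L.prod • α) ∈ C.pos) :
    ∃ L' : List C.W, (∀ s ∈ L', s ∈ C.Simp D) ∧ L'.length < L.length ∧
      L'.prod = L.prod * C.srefl α := by
  have hαr := h.pos_subset (hD.1 hα)
  induction L with
  | nil =>
    simp only [List.prod_nil, one_smul] at hneg
    exact absurd hneg (h.pos_neg_disjoint α (hD.1 hα))
  | cons s M ih =>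
    have hM : ∀ s ∈ M, s ∈ C.Simp D := fun s hs => hL s (List.mem_cons_of_mem _ hs)
    by_cases hm : -(M.prod • α) ∈ C.pos
    · obtain ⟨L', h1, h2, h3⟩ := ih hM hm
      refine ⟨s :: L', ?_, ?_, ?_⟩
      · intro t ht
        rcases List.mem_cons.1 ht with rfl | ht
        · exact hL _ List.mem_cons_self
        · exact h1 t ht
      · simpa using h2
      · rw [List.prod_cons, h3, List.prod_cons, mul_assoc]
    · have hr := h.roots_stable M.prod α hαr
      have hp : M.prod • α ∈ C.pos := by
        by_contra hc
        exact hm ((not_pos h hr).1 hc)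
      obtain ⟨γ, hγ, rfl⟩ := hL s List.mem_cons_self
      rw [List.prod_cons, mul_smul] at hneg
      have e := IsBase.simple h hD hγ hp hneg
      have e2 := srefl_conj h hαr M.prod
      rw [e] at e2
      refine ⟨M, hM, by simp, ?_⟩
      have e3 : M.prod * C.srefl α = C.srefl γ * M.prod := by rw [e2]; group
      rw [List.prod_cons, mul_assoc, e3, ← mul_assoc,
        srefl_mul_self h (h.pos_subset (hD.1 hγ)), one_mul]

theorem eq_one_of_pos (h : C.IsRootDatum) (w : C.W) (hw : ∀ α ∈ C.pos, w • α ∈ C.pos) :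
    w = 1 := by
  obtain ⟨D, hD⟩ := C.exists_base
  obtain ⟨L, hL, hLw⟩ := IsBase.exists_word h hD w
  have key : ∀ N : ℕ, ∀ L : List C.W, L.length = N → (∀ s ∈ L, s ∈ C.Simp D) → L.prod = w →
      w = 1 := by
    intro N
    induction N using Nat.strong_induction_on with
    | _ N ih =>
    intro L hN hL hLw
    rcases List.eq_nil_or_concat L with rfl | ⟨M, s, rfl⟩
    · simpa using hLw.symm
    · simp only [List.concat_eq_append, List.mem_append, List.prod_append,
        List.mem_singleton, List.prod_singleton, List.length_append, List.length_singleton]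
        at hN hL hLw
      obtain ⟨α, hα, rfl⟩ := hL s (Or.inr rfl)
      have hp := hw α (hD.1 hα)
      rw [← hLw, mul_smul, srefl_self_smul h (h.pos_subset (hD.1 hα)), smul_neg] at hp
      obtain ⟨L', h1, h2, h3⟩ := IsBase.exchange h hD hα M (fun s hs => hL s (Or.inl hs)) hp
      exact ih L'.length (by omega) L' rfl h1 (h3.trans hLw)
  exact key _ L rfl hL hLw

/-- the element is determined by its inversions -/
theorem eq_of_inv (h : C.IsRootDatum) {u v : C.W}
    (e : ∀ α ∈ C.pos, (u • α ∈ C.pos ↔ v • α ∈ C.pos)) : u = v := by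
  have : u * v⁻¹ = 1 := by
    apply eq_one_of_pos h
    intro α hα
    have hr := h.roots_stable v⁻¹ α (h.pos_subset hα)
    rw [mul_smul]
    rcases h.root_decomp _ hr with hp | hp
    · rw [e _ hp, smul_inv_smul]; exact hα
    · have h1 : v • (-(v⁻¹ • α)) ∉ C.pos := by
        rw [smul_neg, smul_inv_smul]; exact h.pos_neg_disjoint α hα
      rw [← e _ hp, smul_neg] at h1
      by_contra hc
      exact h1 ((not_pos h (h.roots_stable u _ hr)).1 hc)
  exact mul_inv_eq_one.1 this

theorem exists_dominant (h : C.IsRootDatum) (l : C.Y) : ∃ v : C.W, v • l ∈ C.Ypos := by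
  obtain ⟨ξ, hξ⟩ := h.exists_regular_X
  obtain ⟨v, -, hv⟩ := Finset.exists_max_image (Finset.univ : Finset C.W)
    (fun v => C.pair (v • l) ξ) ⟨1, Finset.mem_univ _⟩
  refine ⟨v, fun α hα => ?_⟩
  have := hv (C.srefl α * v) (Finset.mem_univ _)
  simp only [mul_smul, (srefl_spec h (h.pos_subset hα)).2, map_sub, map_zsmul,
    AddMonoidHom.sub_apply, AddMonoidHom.coe_smul, Pi.smul_apply, smul_eq_mul] at this
  have h1 := hξ α hα
  by_contra hc
  push Not at hc
  nlinarith

theorem pair_smul_left (h : C.IsRootDatum) (v : C.W) (y : C.Y) (x : C.X) :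
    C.pair (v • y) x = C.pair y (v⁻¹ • x) := by
  conv_lhs => rw [← smul_inv_smul v x]
  rw [h.pair_inv]

theorem dominant_inv (h : C.IsRootDatum) {v : C.W} {l : C.Y} (hv : v • l ∈ C.Ypos) {β : C.X}
    (hβ : β ∈ C.pos) (hl : C.pair l β < 0) : v • β ∉ C.pos := by
  intro hc
  have := hv _ hc
  rw [h.pair_inv] at this
  omega

theorem exists_inv (h : C.IsRootDatum) (l : C.Y) :
    ∃ v : C.W, ∀ β ∈ C.pos, (v • β ∈ C.pos ↔ 0 ≤ C.pair l β) := by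
  obtain ⟨η, hη⟩ := h.exists_regular_Y
  set M : ℤ := 1 + ∑ β ∈ C.pos, C.pair η β with hM
  have hle : ∀ β ∈ C.pos, C.pair η β < M := by
    intro β hβ
    have := Finset.single_le_sum (f := fun β => C.pair η β) (fun i hi => (hη i hi).le) hβ
    omega
  obtain ⟨v, hv⟩ := exists_dominant h (M • l + η)
  refine ⟨v, fun β hβ => ?_⟩
  have h1 := hle β hβ
  have h2 := hη β hβ
  have e : C.pair (M • l + η) β = M * C.pair l β + C.pair η β := by simp
  constructor
  · intro hp
    have := hv _ hp
    rw [h.pair_inv, e] at this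
    by_contra hc
    push Not at hc
    nlinarith
  · intro hp
    by_contra hc
    rw [not_pos h (h.roots_stable v β (h.pos_subset hβ))] at hc
    have := hv _ hc
    rw [map_neg, h.pair_inv, e] at this
    nlinarith

theorem dominant_of_inv (h : C.IsRootDatum) {v : C.W} {l : C.Y}
    (hv : ∀ β ∈ C.pos, (v • β ∈ C.pos ↔ 0 ≤ C.pair l β)) : v • l ∈ C.Ypos := by
  intro α hα
  rw [pair_smul_left h]
  have hr := h.roots_stable v⁻¹ α (h.pos_subset hα)
  rcases h.root_decomp _ hr with hp | hp
  · rw [← hv _ hp, smul_inv_smul]; exact hα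
  · have h1 : v • (-(v⁻¹ • α)) ∉ C.pos := by
      rw [smul_neg, smul_inv_smul]; exact h.pos_neg_disjoint α hα
    rw [hv _ hp, map_neg] at h1
    omega

theorem lenW_eq (h : C.IsRootDatum) (v : C.W) :
    C.lenW v = ∑ β ∈ C.pos, if v • β ∈ C.pos then 0 else 1 := by
  rw [lenW, Finset.card_filter]
  refine Finset.sum_congr rfl fun β hβ => ?_
  have := not_pos h (h.roots_stable v β (h.pos_subset hβ))
  by_cases hc : v • β ∈ C.pos <;> simp [hc, ← this]

/-- the positive one among `± x` -/
def posRep (C : Ctx) (x : C.X) : C.X := if x ∈ C.pos then x else -x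

theorem posRep_mem (h : C.IsRootDatum) {x : C.X} (hx : x ∈ C.roots) : C.posRep x ∈ C.pos := by
  unfold posRep
  split_ifs with hc
  · exact hc
  · exact (not_pos h hx).1 hc

theorem posRep_inv (h : C.IsRootDatum) (u : C.W) {α : C.X} (hα : α ∈ C.pos) :
    C.posRep (u⁻¹ • C.posRep (u • α)) = α := by
  unfold posRep
  by_cases hc : u • α ∈ C.pos
  · simp [hc, hα]
  · simp [hc, h.pos_neg_disjoint α hα]

theorem len_eq (h : C.IsRootDatum) (l : C.Y) (u : C.W) :
    C.len (C.t l * C.σ u) = ∑ β ∈ C.pos,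
      if u⁻¹ • β ∈ C.pos then (C.pair l β).natAbs else (1 + C.pair l β).natAbs := by
  have hl : (C.t l * C.σ u).left = Multiplicative.ofAdd l := by simp [t, σ]
  have hr : (C.t l * C.σ u).right = u := by simp [t, σ]
  unfold len
  rw [hl, hr]
  refine Finset.sum_bij' (fun α _ => C.posRep (u • α)) (fun β _ => C.posRep (u⁻¹ • β)) ?_ ?_ ?_ ?_ ?_
  · intro α hα
    exact posRep_mem h (h.roots_stable _ _ (h.pos_subset hα))
  · intro α hα
    exact posRep_mem h (h.roots_stable _ _ (h.pos_subset hα))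
  · intro α hα
    exact posRep_inv h u hα
  · intro α hα
    simpa using posRep_inv h u⁻¹ hα
  · intro α hα
    rw [pair_smul_left h, inv_inv, toAdd_ofAdd]
    unfold posRep
    by_cases hc : u • α ∈ C.pos
    · simp [hc, hα]
    · simp [hc, h.pos_neg_disjoint α hα, sub_eq_add_neg]

end Ctx
end SemiInf

/-- For `λ ∈ Y`: among the `v ∈ W_f` with `v(λ) ∈ Y₊` there is a unique element
`v_λ` of minimal length; `w_λ := t_λ v_λ⁻¹` is the unique element of minimal
length in the coset `t_λ W_f`, and `ℓ(w_λ) = ℓ(t_λ) − ℓ(v_λ)`. -/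
theorem statement4 (C : SemiInf.Ctx) (h : C.IsRootDatum) (l : C.Y) :
    ∃ v : C.W,
      (v • l ∈ C.Ypos ∧ ∀ v' : C.W, v' • l ∈ C.Ypos → C.lenW v ≤ C.lenW v') ∧
      (∀ v' : C.W,
        (v' • l ∈ C.Ypos ∧ ∀ v'' : C.W, v'' • l ∈ C.Ypos → C.lenW v' ≤ C.lenW v'') →
        v' = v) ∧
      (∀ u : C.W, C.len (C.t l * C.σ v⁻¹) ≤ C.len (C.t l * C.σ u)) ∧
      (∀ u : C.W,
        (∀ u' : C.W, C.len (C.t l * C.σ u) ≤ C.len (C.t l * C.σ u')) →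
        C.t l * C.σ u = C.t l * C.σ v⁻¹) ∧
      (C.len (C.t l * C.σ v⁻¹) : ℤ) = (C.len (C.t l) : ℤ) - (C.lenW v : ℤ) := by
  obtain ⟨v, hv⟩ := SemiInf.Ctx.exists_inv h l
  have hvd := SemiInf.Ctx.dominant_of_inv h hv
  have hW : ∀ v' : C.W, v' • l ∈ C.Ypos → ∀ β ∈ C.pos,
      (if v • β ∈ C.pos then 0 else 1) ≤ (if v' • β ∈ C.pos then 0 else 1) := by
    intro v' hv' β hβ
    by_cases hc : 0 ≤ C.pair l β
    · simp [(hv β hβ).2 hc]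
    · push Not at hc
      simp [SemiInf.Ctx.dominant_inv h hv' hβ hc]
      split_ifs <;> simp
  have hL : ∀ u : C.W, ∀ β ∈ C.pos,
      (if v⁻¹⁻¹ • β ∈ C.pos then (C.pair l β).natAbs else (1 + C.pair l β).natAbs) ≤
      (if u⁻¹ • β ∈ C.pos then (C.pair l β).natAbs else (1 + C.pair l β).natAbs) := by
    intro u β hβ
    have h0 := hv β hβ
    rw [inv_inv]
    by_cases h1 : v • β ∈ C.pos <;> simp only [h1, true_iff, false_iff, if_true, if_false] at h0 ⊢ <;>
      split_ifs <;> omega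
  have hle : ∀ u : C.W, C.len (C.t l * C.σ v⁻¹) ≤ C.len (C.t l * C.σ u) := by
    intro u
    rw [SemiInf.Ctx.len_eq h, SemiInf.Ctx.len_eq h]
    exact Finset.sum_le_sum (hL u)
  have hWle : ∀ v' : C.W, v' • l ∈ C.Ypos → C.lenW v ≤ C.lenW v' := by
    intro v' hv'
    rw [SemiInf.Ctx.lenW_eq h, SemiInf.Ctx.lenW_eq h]
    exact Finset.sum_le_sum (hW v' hv')
  refine ⟨v, ⟨hvd, hWle⟩, ?_, hle, ?_, ?_⟩
  · rintro v' ⟨hv', hmin⟩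
    have he := le_antisymm (hWle v' hv') (hmin v hvd)
    rw [SemiInf.Ctx.lenW_eq h, SemiInf.Ctx.lenW_eq h, Finset.sum_eq_sum_iff_of_le (hW v' hv')] at he
    apply SemiInf.Ctx.eq_of_inv h
    intro α hα
    have := he α hα
    by_cases h1 : v • α ∈ C.pos <;> by_cases h2 : v' • α ∈ C.pos <;>
      simp [h1, h2] at this ⊢
  · intro u hmin
    have he := le_antisymm (hle u) (hmin v⁻¹)
    rw [SemiInf.Ctx.len_eq h, SemiInf.Ctx.len_eq h, Finset.sum_eq_sum_iff_of_le (hL u)] at he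
    have : u⁻¹ = v := by
      apply SemiInf.Ctx.eq_of_inv h
      intro α hα
      have := he α hα
      have h0 := hv α hα
      rw [inv_inv] at this
      by_cases h1 : v • α ∈ C.pos <;> by_cases h2 : u⁻¹ • α ∈ C.pos <;>
        simp only [h1, h2, if_true, if_false, true_iff, false_iff] at this h0 ⊢ <;> omega
    rw [← this, inv_inv]
  · have h1 : C.t l = C.t l * C.σ 1 := by simp [SemiInf.Ctx.σ]
    have h2 : C.len (C.t l) = C.len (C.t l * C.σ v⁻¹) + C.lenW v := by
      rw [h1, mul_assoc]
      have : C.σ 1 * C.σ v⁻¹ = C.σ v⁻¹ := by simp [SemiInf.Ctx.σ]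
      rw [this, SemiInf.Ctx.len_eq h, SemiInf.Ctx.len_eq h, SemiInf.Ctx.lenW_eq h,
        ← Finset.sum_add_distrib]
      refine Finset.sum_congr rfl fun β hβ => ?_
      have h0 := hv β hβ
      rw [inv_inv, inv_one, one_smul, if_pos hβ]
      by_cases h1 : v • β ∈ C.pos <;> simp only [h1, true_iff, false_iff, if_true, if_false] at h0 ⊢ <;>
        omega
    rw [h2]; push_cast; ring
end
end
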